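/- arXiv:alg-geom/9601012 — 6 statements merged into one kernel-verified Lean document; each statement's English description precedes it below -/
import Mathlib

section
/- (Super Cramer's rule, odd positions.) Let A = [[X, α],[β, Y]] be an invertible even (k|l)-supermatrix over Λ (equivalently, X and Y are both invertible), set m := k+l, and let x, y ∈ Λ^m be row vectors with x·A = y, i.e. Σ_p x_p·a_{pj} = y_j for all j. Write y = (y′, y″) with y′ its first k entries and y″ its last l entries. Then for every i with k < i ≤ m: x_i·det(Y − β·X⁻¹·α) = Σ_{j=1}^{l} (y″ − y′·X⁻¹·α)_j·C_{(i−k)j}, where C_{(i−k)j} denotes the (i−k, j)-cofactor of the matrix Y − β·X⁻¹·α over the commutative ring Λ₀; that is, x_i·det(Y − β·X⁻¹·α) equals the row-(i−k) Laplace expansion of the determinant of the matrix obtained from Y − β·X⁻¹·α by replacing its (i−k)-th row with the row y″ − y′·X⁻¹·α. Equivalently, x_i = ber*(A_i(y))·ber*(A)⁻¹, where ber*(A_i(y)) is obtained from the expression ber*(A) = det(X)⁻¹·det(Y − β·X⁻¹·α), which is Λ-linear in the entries of row i of A, by substituting y_j for a_{ij} (j = 1,…,m). -/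
noncomputable section

open ExteriorAlgebra

/-- `Λ n`: the exterior algebra of `ℂⁿ` (with its `n` odd generators `βᵢ`). -/
abbrev SuperAlg (n : ℕ) : Type := ExteriorAlgebra ℂ (Fin n → ℂ)

/-- The even part `Λ₀` of the exterior algebra, i.e. the degree-`0̄` part of its `ℤ₂`-grading. -/
def evenPart (n : ℕ) : Submodule ℂ (SuperAlg n) :=
  CliffordAlgebra.evenOdd (0 : QuadraticForm ℂ (Fin n → ℂ)) 0

/-- The odd part `Λ₁` of the exterior algebra, i.e. the degree-`1̄` part of its `ℤ₂`-grading. -/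
def oddPart (n : ℕ) : Submodule ℂ (SuperAlg n) :=
  CliffordAlgebra.evenOdd (0 : QuadraticForm ℂ (Fin n → ℂ)) 1

/-- The determinant of a square matrix over a (possibly noncommutative) ring, given by the
Leibniz formula, the product over each permutation being taken in the canonical order of the
index set.  For matrices whose entries lie in a central commutative subring (such as `Λ₀ ⊆ Λ`)
this is the usual determinant. -/
def ncdet {R : Type*} [Ring R] {k : ℕ} (M : Matrix (Fin k) (Fin k) R) : R :=
  ∑ σ : Equiv.Perm (Fin k), ((Equiv.Perm.sign σ : ℤˣ) : ℤ) • (List.ofFn fun i => M (σ i) i).prod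

/-- The even-even block `X` of a `(k|l)`-block matrix. -/
def Xblk (n k l : ℕ) (A : Matrix (Fin (k + l)) (Fin (k + l)) (SuperAlg n)) :
    Matrix (Fin k) (Fin k) (SuperAlg n) :=
  fun i j => A (Fin.castAdd l i) (Fin.castAdd l j)

/-- The even-odd block `α` of a `(k|l)`-block matrix. -/
def alphaBlk (n k l : ℕ) (A : Matrix (Fin (k + l)) (Fin (k + l)) (SuperAlg n)) :
    Matrix (Fin k) (Fin l) (SuperAlg n) :=
  fun i j => A (Fin.castAdd l i) (Fin.natAdd k j)

/-- The odd-even block `β` of a `(k|l)`-block matrix. -/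
def betaBlk (n k l : ℕ) (A : Matrix (Fin (k + l)) (Fin (k + l)) (SuperAlg n)) :
    Matrix (Fin l) (Fin k) (SuperAlg n) :=
  fun i j => A (Fin.natAdd k i) (Fin.castAdd l j)

/-- The odd-odd block `Y` of a `(k|l)`-block matrix. -/
def Yblk (n k l : ℕ) (A : Matrix (Fin (k + l)) (Fin (k + l)) (SuperAlg n)) :
    Matrix (Fin l) (Fin l) (SuperAlg n) :=
  fun i j => A (Fin.natAdd k i) (Fin.natAdd k j)

/-- `A` is an even `(k|l)`-supermatrix: the diagonal blocks `X`, `Y` have entries in `Λ₀` and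
the off-diagonal blocks `α`, `β` have entries in `Λ₁`. -/
def IsEvenSupermatrix (n k l : ℕ) (A : Matrix (Fin (k + l)) (Fin (k + l)) (SuperAlg n)) : Prop :=
  (∀ i j, Xblk n k l A i j ∈ evenPart n) ∧ (∀ i j, Yblk n k l A i j ∈ evenPart n) ∧
  (∀ i j, alphaBlk n k l A i j ∈ oddPart n) ∧ (∀ i j, betaBlk n k l A i j ∈ oddPart n)

/-- The Berezinian `ber(A) = det(X − α·Y⁻¹·β)·det(Y)⁻¹` (defined when `Y` is invertible). -/
def ber (n k l : ℕ) (A : Matrix (Fin (k + l)) (Fin (k + l)) (SuperAlg n)) : SuperAlg n :=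
  ncdet (Xblk n k l A - alphaBlk n k l A * Ring.inverse (Yblk n k l A) * betaBlk n k l A) *
    Ring.inverse (ncdet (Yblk n k l A))

/-- The inverse Berezinian `ber*(A) = det(X)⁻¹·det(Y − β·X⁻¹·α)` (defined when `X` is
invertible). -/
def berStar (n k l : ℕ) (A : Matrix (Fin (k + l)) (Fin (k + l)) (SuperAlg n)) : SuperAlg n :=
  Ring.inverse (ncdet (Xblk n k l A)) *
    ncdet (Yblk n k l A - betaBlk n k l A * Ring.inverse (Xblk n k l A) * alphaBlk n k l A)

/-!
Even elements of `Λ` are central and the product of two odd ones is central and nilpotent. Hence the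
Schur complement `S = Y − β·X⁻¹·α` has central entries and differs from the invertible `Y` by
nilpotent ones, so `det S` is a unit. Eliminating the even unknowns from `x·A = y` leaves
`x″·S = y″ − y′·X⁻¹·α`. A row with arbitrary entries in `Λ` may replace a row of `S` in the Leibniz
formula, since every Leibniz term then contains a single non-central factor: the determinant stays
additive and left-homogeneous in that row, and the classical proof of Cramer's rule applies.
Replacing row `i` of `A` by `y` replaces the corresponding row of `S` by `y″ − y′·X⁻¹·α` and leaves
`X` alone, which gives the formula in terms of `ber*`.
-/

open scoped Matrix

section Ncdet

variable {R : Type*} [Ring R] {k : ℕ}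

variable (R k) in
/-- The determinant `ncdet` as an alternating map of the rows, the counterpart of
`Matrix.detRowAlternating`. It is alternating over any ring because the factors of each Leibniz
term are ordered by column; scalars are restricted to `ℤ` since only additivity is needed. -/
def ncdetRowAlternating : (Fin k → R) [⋀^Fin k]→ₗ[ℤ] R :=
  MultilinearMap.alternatization <|
    (MultilinearMap.mkPiAlgebraFin ℤ k R).compLinearMap fun i => LinearMap.proj i

theorem ncdetRowAlternating_apply (M : Matrix (Fin k) (Fin k) R) :
    ncdetRowAlternating R k M = ncdet M :=
  MultilinearMap.alternatization_apply _ _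

theorem ncdet_updateRow_sum {ι : Type*} (M : Matrix (Fin k) (Fin k) R) (i : Fin k)
    (s : Finset ι) (v : ι → Fin k → R) :
    ncdet (M.updateRow i (∑ p ∈ s, v p)) = ∑ p ∈ s, ncdet (M.updateRow i (v p)) := by
  simp only [← ncdetRowAlternating_apply]
  exact (ncdetRowAlternating R k).map_update_sum s i v M

theorem prod_ofFn_mulSingle {G : Type*} [Monoid G] (p : Fin k) (a : G) :
    (List.ofFn (Pi.mulSingle p a : Fin k → G)).prod = a := by
  induction k with
  | zero => exact p.elim0
  | succ k ih =>
    rw [List.ofFn_succ, List.prod_cons]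
    cases p using Fin.cases with
    | zero => simp
    | succ p =>
      have htail : (fun q : Fin k => (Pi.mulSingle p.succ a : Fin (k + 1) → G) q.succ) =
          Pi.mulSingle p a := by
        ext q
        simp [Pi.mulSingle_apply]
      rw [htail, ih, Pi.mulSingle_eq_of_ne (Fin.succ_ne_zero p).symm, one_mul]

theorem prod_ofFn_smul {C S : Type*} [CommSemiring C] [Semiring S] [Algebra C S]
    (c : Fin k → C) (f : Fin k → S) :
    (List.ofFn fun q => c q • f q).prod = (∏ q, c q) • (List.ofFn f).prod := by
  simpa only [MultilinearMap.mkPiAlgebraFin_apply] using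
    (MultilinearMap.mkPiAlgebraFin C k S).map_smul_univ c f

end Ncdet

section CentralAlgebra

variable {C R : Type*} [CommRing C] [Ring R] [Algebra C R] {k : ℕ}

theorem ncdet_map_algebraMap (M : Matrix (Fin k) (Fin k) C) :
    ncdet (M.map (algebraMap C R)) = algebraMap C R M.det := by
  simp only [ncdet, Matrix.det_apply, map_sum, Units.smul_def, map_zsmul, ← List.prod_ofFn,
    map_list_prod, List.map_ofFn, Matrix.map_apply, Function.comp_def]

theorem ncdet_updateRow_smul (M : Matrix (Fin k) (Fin k) C) (i : Fin k) (u : Fin k → C) (a : R) :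
    ncdet ((M.map (algebraMap C R)).updateRow i fun j => u j • a) = (M.updateRow i u).det • a := by
  have entry (σ : Equiv.Perm (Fin k)) (q : Fin k) :
      (M.map (algebraMap C R)).updateRow i (fun j => u j • a) (σ q) q =
        M.updateRow i u (σ q) q • (Pi.mulSingle (σ.symm i) a : Fin k → R) q := by
    by_cases hq : σ q = i
    · obtain rfl : q = σ.symm i := by rw [← hq, Equiv.symm_apply_apply]
      simp
    · have : q ≠ σ.symm i := fun h => hq (by simp [h])
      simp [hq, this, Algebra.algebraMap_eq_smul_one]
  simp only [ncdet, entry, prod_ofFn_smul, prod_ofFn_mulSingle, Matrix.det_apply, Finset.sum_smul,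
    Units.smul_def, smul_assoc]

theorem ncdet_updateRow_eq_sum_adjugate_smul (M : Matrix (Fin k) (Fin k) C) (i : Fin k)
    (w : Fin k → R) :
    ncdet ((M.map (algebraMap C R)).updateRow i w) = ∑ j, M.adjugate j i • w j := by
  have hw : w = ∑ j, fun q => (Pi.single j 1 : Fin k → C) q • w j := by
    ext q
    simp [Finset.sum_apply, Pi.single_apply]
  conv_lhs => rw [hw, ncdet_updateRow_sum]
  simp only [ncdet_updateRow_smul, Matrix.adjugate_apply]

theorem ncdet_updateRow_vecMul (M : Matrix (Fin k) (Fin k) C) (i : Fin k) (v : Fin k → R) :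
    ncdet ((M.map (algebraMap C R)).updateRow i (v ᵥ* M.map (algebraMap C R))) = M.det • v i := by
  have hv : v ᵥ* M.map (algebraMap C R) = ∑ p, fun q => M p q • v p := by
    ext q
    simp [Matrix.vecMul, dotProduct, Finset.sum_apply, Algebra.smul_def, Algebra.commutes]
  rw [hv, ncdet_updateRow_sum, Finset.sum_eq_single i]
  · rw [ncdet_updateRow_smul, Matrix.updateRow_eq_self]
  · intro p _ hp
    rw [ncdet_updateRow_smul, Matrix.det_updateRow_eq_zero hp, zero_smul]
  · simp

end CentralAlgebra

section CentralEntries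

variable {R : Type*} [Ring R] {k : ℕ}

theorem exists_map_algebraMap_center_eq {m n : Type*} {M : Matrix m n R}
    (hM : ∀ i j, M i j ∈ Subring.center R) :
    ∃ M' : Matrix m n (Subring.center R), M'.map (algebraMap (Subring.center R) R) = M :=
  ⟨fun i j => ⟨M i j, hM i j⟩, rfl⟩

theorem ncdet_mem_center {M : Matrix (Fin k) (Fin k) R} (hM : ∀ i j, M i j ∈ Subring.center R) :
    ncdet M ∈ Subring.center R := by
  obtain ⟨M, rfl⟩ := exists_map_algebraMap_center_eq hM
  rw [ncdet_map_algebraMap]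
  exact M.det.2

theorem ncdet_updateRow_vecMul_of_mem_center {M : Matrix (Fin k) (Fin k) R}
    (hM : ∀ i j, M i j ∈ Subring.center R) (i : Fin k) (v : Fin k → R) :
    ncdet (M.updateRow i (v ᵥ* M)) = v i * ncdet M := by
  obtain ⟨M, rfl⟩ := exists_map_algebraMap_center_eq hM
  rw [ncdet_updateRow_vecMul, ncdet_map_algebraMap, Algebra.smul_def, Algebra.commutes]

theorem ncdet_updateRow_eq_sum_cofactor {M : Matrix (Fin (k + 1)) (Fin (k + 1)) R}
    (hM : ∀ i j, M i j ∈ Subring.center R) (i : Fin (k + 1)) (w : Fin (k + 1) → R) :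
    ncdet (M.updateRow i w) =
      ∑ j, w j * ((-1 : ℤ) ^ ((i : ℕ) + (j : ℕ)) •
        ncdet (M.submatrix i.succAbove j.succAbove)) := by
  obtain ⟨M, rfl⟩ := exists_map_algebraMap_center_eq hM
  rw [ncdet_updateRow_eq_sum_adjugate_smul]
  refine Finset.sum_congr rfl fun j _ => ?_
  rw [Matrix.adjugate_fin_succ_eq_det_submatrix, Matrix.submatrix_map, ncdet_map_algebraMap,
    Algebra.smul_def, Algebra.commutes, zsmul_eq_mul]
  simp

theorem ringInverse_mem_center {a : R} (ha : a ∈ Subring.center R) :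
    Ring.inverse a ∈ Subring.center R := by
  by_cases h : IsUnit a
  · obtain ⟨u, rfl⟩ := h
    rw [Ring.inverse_unit]
    exact Set.units_inv_mem_center ha
  · rw [Ring.inverse_non_unit _ h]
    exact zero_mem _

theorem forall_mem_center_iff_commute_scalar {n : Type*} [Fintype n] [DecidableEq n]
    {M : Matrix n n R} :
    (∀ i j, M i j ∈ Subring.center R) ↔ ∀ r, Commute (Matrix.scalar n r) M := by
  simp only [Matrix.scalar_commute_iff, Subring.mem_center_iff, ← Matrix.ext_iff,
    Matrix.smul_apply, smul_eq_mul, MulOpposite.smul_eq_mul_unop, MulOpposite.unop_op]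
  exact ⟨fun h r i j => h i j r, fun h i j r => h r i j⟩

theorem matrix_ringInverse_mem_center {n : Type*} [Fintype n] [DecidableEq n]
    {M : Matrix n n R} (hM : ∀ i j, M i j ∈ Subring.center R) :
    ∀ i j, Ring.inverse M i j ∈ Subring.center R := by
  by_cases h : IsUnit M
  · obtain ⟨u, rfl⟩ := h
    rw [forall_mem_center_iff_commute_scalar] at hM ⊢
    rw [Ring.inverse_unit]
    exact fun r => (hM r).units_inv_right
  · rw [Ring.inverse_non_unit _ h]
    exact fun _ _ => zero_mem _

theorem isUnit_det_of_isUnit_map {n : Type*} [Fintype n] [DecidableEq n]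
    {M : Matrix n n (Subring.center R)}
    (hM : IsUnit (M.map (algebraMap (Subring.center R) R))) : IsUnit M.det := by
  let φ := (algebraMap (Subring.center R) R).mapMatrix (m := n)
  have hφ : Function.Injective φ := Matrix.map_injective Subtype.val_injective
  obtain ⟨N, hN : φ N = Ring.inverse (φ M)⟩ := exists_map_algebraMap_center_eq
    (matrix_ringInverse_mem_center fun i j => (M i j).2)
  have hMN : M * N = 1 := hφ <| by
    rw [map_mul, hN, Ring.mul_inverse_cancel (φ M) hM, map_one]
  exact (Matrix.isUnit_iff_isUnit_det M).1 (.of_mul_eq_one N hMN)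

theorem isUnit_ncdet {M : Matrix (Fin k) (Fin k) R} (hM : ∀ i j, M i j ∈ Subring.center R)
    (hu : IsUnit M) : IsUnit (ncdet M) := by
  obtain ⟨M, rfl⟩ := exists_map_algebraMap_center_eq hM
  rw [ncdet_map_algebraMap]
  exact (isUnit_det_of_isUnit_map hu).map _

theorem isUnit_det_sub_of_isNilpotent {S n : Type*} [CommRing S] [Fintype n] [DecidableEq n]
    {M N : Matrix n n S} (hM : IsUnit M.det) (hN : ∀ i j, IsNilpotent (N i j)) :
    IsUnit (M - N).det := by
  let π := Ideal.Quotient.mk (nilradical S)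
  have : IsLocalHom π := isLocalHom_of_le_jacobson_bot _
    (Ideal.jacobson_bot (R := S) ▸ nilradical_le_jacobson S)
  have hπN : π.mapMatrix N = 0 := by
    ext i j
    exact Ideal.Quotient.eq_zero_iff_mem.2 (hN i j)
  rw [← isUnit_map_iff π, RingHom.map_det, map_sub, hπN, sub_zero, ← RingHom.map_det]
  exact hM.map π

theorem isUnit_ncdet_sub_of_isNilpotent {M N : Matrix (Fin k) (Fin k) R}
    (hM : ∀ i j, M i j ∈ Subring.center R) (hN : ∀ i j, N i j ∈ Subring.center R)
    (hu : IsUnit M) (hnil : ∀ i j, IsNilpotent (N i j)) : IsUnit (ncdet (M - N)) := by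
  obtain ⟨M, rfl⟩ := exists_map_algebraMap_center_eq hM
  obtain ⟨N, rfl⟩ := exists_map_algebraMap_center_eq hN
  rw [← Matrix.map_sub _ (map_sub _), ncdet_map_algebraMap]
  refine (isUnit_det_sub_of_isNilpotent (isUnit_det_of_isUnit_map hu) fun i j => ?_).map _
  exact (IsNilpotent.map_iff (f := algebraMap (Subring.center R) R) Subtype.val_injective).1
    (hnil i j)

end CentralEntries

section SuperCommutativity

variable {K V : Type*} [CommRing K] [AddCommGroup V] [Module K V]

theorem mul_eq_involute_mul_of_anticommute_ι {a : ExteriorAlgebra K V}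
    (ha : ∀ v, a * ι K v = -(ι K v * a)) (b : ExteriorAlgebra K V) :
    a * b = CliffordAlgebra.involute b * a := by
  induction b using ExteriorAlgebra.induction with
  | algebraMap r => rw [AlgHom.commutes, Algebra.commutes]
  | ι v => rw [ha, CliffordAlgebra.involute_ι, neg_mul]
  | mul b c hb hc => rw [← mul_assoc, hb, mul_assoc, hc, map_mul, mul_assoc]
  | add b c hb hc => rw [mul_add, hb, hc, map_add, add_mul]

theorem ι_mul_eq_involute_mul (v : V) (b : ExteriorAlgebra K V) :
    ι K v * b = CliffordAlgebra.involute b * ι K v :=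
  mul_eq_involute_mul_of_anticommute_ι (fun w => eq_neg_of_add_eq_zero_left (ι_add_mul_swap v w)) b

theorem mem_center_of_mem_even {a : ExteriorAlgebra K V}
    (ha : a ∈ CliffordAlgebra.evenOdd (0 : QuadraticForm K V) 0) :
    a ∈ Subring.center (ExteriorAlgebra K V) := by
  rw [Subring.mem_center_iff]
  intro b
  change Commute b a
  induction b using ExteriorAlgebra.induction with
  | algebraMap r => exact Algebra.commutes r a
  | ι v => exact (ι_mul_eq_involute_mul v a).trans (by
      rw [CliffordAlgebra.involute_eq_of_mem_even ha])
  | mul b c hb hc => exact hb.mul_left hc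
  | add b c hb hc => exact hb.add_left hc

variable {a b : ExteriorAlgebra K V}

theorem mul_eq_neg_mul_of_mem_odd (ha : a ∈ CliffordAlgebra.evenOdd (0 : QuadraticForm K V) 1)
    (hb : b ∈ CliffordAlgebra.evenOdd (0 : QuadraticForm K V) 1) : a * b = -(b * a) := by
  have anticommute_ι (v : V) : a * ι K v = -(ι K v * a) := by
    rw [ι_mul_eq_involute_mul, CliffordAlgebra.involute_eq_of_mem_odd ha, neg_mul, neg_neg]
  rw [mul_eq_involute_mul_of_anticommute_ι anticommute_ι,
    CliffordAlgebra.involute_eq_of_mem_odd hb, neg_mul]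

theorem mul_self_eq_zero_of_mem_odd
    (ha : a ∈ CliffordAlgebra.evenOdd (0 : QuadraticForm K V) 1) : a * a = 0 := by
  induction a, ha using CliffordAlgebra.odd_induction with
  | ι v => exact ι_sq_zero v
  | add x y hx hy hxx hyy =>
    rw [mul_add, add_mul, add_mul, hxx, hyy, mul_eq_neg_mul_of_mem_odd hx hy]
    simp
  | ι_mul_ι_mul u v x _ hxx =>
    have huv := Subring.mem_center_iff.1 (mem_center_of_mem_even
      (CliffordAlgebra.ι_mul_ι_mem_evenOdd_zero (0 : QuadraticForm K V) u v)) x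
    rw [mul_assoc, ← mul_assoc x, huv, mul_assoc _ x, hxx]
    simp

theorem mul_mem_center_of_mem_odd
    (ha : a ∈ CliffordAlgebra.evenOdd (0 : QuadraticForm K V) 1)
    (hb : b ∈ CliffordAlgebra.evenOdd (0 : QuadraticForm K V) 1) :
    a * b ∈ Subring.center (ExteriorAlgebra K V) :=
  mem_center_of_mem_even (CliffordAlgebra.evenOdd_mul_le _ 1 1 (Submodule.mul_mem_mul ha hb))

theorem isNilpotent_mul_of_mem_odd
    (ha : a ∈ CliffordAlgebra.evenOdd (0 : QuadraticForm K V) 1)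
    (hb : b ∈ CliffordAlgebra.evenOdd (0 : QuadraticForm K V) 1) : IsNilpotent (a * b) := by
  refine ⟨2, ?_⟩
  calc (a * b) ^ 2 = a * (b * a) * b := by noncomm_ring
    _ = -(a * a * (b * b)) := by rw [mul_eq_neg_mul_of_mem_odd hb ha]; noncomm_ring
    _ = 0 := by rw [mul_self_eq_zero_of_mem_odd ha, zero_mul, neg_zero]

theorem mul_mul_mem_center_of_mem_odd {z : ExteriorAlgebra K V}
    (ha : a ∈ CliffordAlgebra.evenOdd (0 : QuadraticForm K V) 1)
    (hz : z ∈ Subring.center (ExteriorAlgebra K V))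
    (hb : b ∈ CliffordAlgebra.evenOdd (0 : QuadraticForm K V) 1) :
    a * z * b ∈ Subring.center (ExteriorAlgebra K V) := by
  rw [Subring.mem_center_iff.1 hz a, mul_assoc]
  exact mul_mem hz (mul_mem_center_of_mem_odd ha hb)

theorem isNilpotent_mul_mul_of_mem_odd {z : ExteriorAlgebra K V}
    (ha : a ∈ CliffordAlgebra.evenOdd (0 : QuadraticForm K V) 1)
    (hz : z ∈ Subring.center (ExteriorAlgebra K V))
    (hb : b ∈ CliffordAlgebra.evenOdd (0 : QuadraticForm K V) 1) :
    IsNilpotent (a * z * b) := by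
  rw [Subring.mem_center_iff.1 hz a, mul_assoc]
  exact Commute.isNilpotent_mul_left (Subring.mem_center_iff.1 hz _).symm
    (isNilpotent_mul_of_mem_odd ha hb)

variable {m n : Type*} [Fintype m] {β : Matrix n m (ExteriorAlgebra K V)}
  {Z : Matrix m m (ExteriorAlgebra K V)} {α : Matrix m n (ExteriorAlgebra K V)}

theorem matrix_mul_mul_mem_center_of_mem_odd
    (hβ : ∀ i j, β i j ∈ CliffordAlgebra.evenOdd (0 : QuadraticForm K V) 1)
    (hZ : ∀ i j, Z i j ∈ Subring.center (ExteriorAlgebra K V))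
    (hα : ∀ i j, α i j ∈ CliffordAlgebra.evenOdd (0 : QuadraticForm K V) 1) (i j : n) :
    (β * Z * α) i j ∈ Subring.center (ExteriorAlgebra K V) := by
  simp only [Matrix.mul_apply, Finset.sum_mul]
  exact sum_mem fun r _ => sum_mem fun q _ =>
    mul_mul_mem_center_of_mem_odd (hβ i q) (hZ q r) (hα r j)

theorem isNilpotent_matrix_mul_mul_of_mem_odd
    (hβ : ∀ i j, β i j ∈ CliffordAlgebra.evenOdd (0 : QuadraticForm K V) 1)
    (hZ : ∀ i j, Z i j ∈ Subring.center (ExteriorAlgebra K V))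
    (hα : ∀ i j, α i j ∈ CliffordAlgebra.evenOdd (0 : QuadraticForm K V) 1) (i j : n) :
    IsNilpotent ((β * Z * α) i j) := by
  have central (q r : m) := mul_mul_mem_center_of_mem_odd (hβ i q) (hZ q r) (hα r j)
  simp only [Matrix.mul_apply, Finset.sum_mul, ← Fintype.sum_prod_type']
  exact Commute.isNilpotent_sum
    (fun p _ => isNilpotent_mul_mul_of_mem_odd (hβ i p.2) (hZ p.2 p.1) (hα p.1 j))
    fun p p' _ _ => Subring.mem_center_iff.1 (central p'.2 p'.1) _

end SuperCommutativity

section Supermatrix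

variable {n k l : ℕ} {A : Matrix (Fin (k + l)) (Fin (k + l)) (SuperAlg n)}

/-- The Schur complement `Y − β·X⁻¹·α` of the even block `X`. `Ring.inverse` makes it equal to `Y`
when `X` is not invertible. -/
def schurCompl (A : Matrix (Fin (k + l)) (Fin (k + l)) (SuperAlg n)) :
    Matrix (Fin l) (Fin l) (SuperAlg n) :=
  Yblk n k l A - betaBlk n k l A * Ring.inverse (Xblk n k l A) * alphaBlk n k l A

/-- The row `y″ − y′·X⁻¹·α` obtained from `y = (y′, y″)` by clearing its first `k` entries with the
first `k` rows of `A`. -/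
def reducedRow (A : Matrix (Fin (k + l)) (Fin (k + l)) (SuperAlg n))
    (y : Fin (k + l) → SuperAlg n) : Fin l → SuperAlg n :=
  y ∘ Fin.natAdd k -
    (y ∘ Fin.castAdd l) ᵥ* Ring.inverse (Xblk n k l A) ᵥ* alphaBlk n k l A

theorem reducedRow_apply (y : Fin (k + l) → SuperAlg n) (j : Fin l) :
    reducedRow A y j = y (Fin.natAdd k j) - ∑ r, ∑ q,
      y (Fin.castAdd l r) * Ring.inverse (Xblk n k l A) r q * alphaBlk n k l A q j := by
  rw [Finset.sum_comm]
  simp only [reducedRow, Pi.sub_apply, Function.comp_apply, Matrix.vecMul, dotProduct,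
    Finset.sum_mul]

theorem reducedRow_row (i : Fin l) : reducedRow A (A (Fin.natAdd k i)) = schurCompl A i :=
  rfl

theorem reducedRow_vecMul (hX : IsUnit (Xblk n k l A)) (x : Fin (k + l) → SuperAlg n) :
    reducedRow A (x ᵥ* A) = (x ∘ Fin.natAdd k) ᵥ* schurCompl A := by
  have even_part : (x ᵥ* A) ∘ Fin.castAdd l =
      (x ∘ Fin.castAdd l) ᵥ* Xblk n k l A + (x ∘ Fin.natAdd k) ᵥ* betaBlk n k l A :=
    funext fun _ => Fin.sum_univ_add _
  have odd_part : (x ᵥ* A) ∘ Fin.natAdd k =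
      (x ∘ Fin.castAdd l) ᵥ* alphaBlk n k l A + (x ∘ Fin.natAdd k) ᵥ* Yblk n k l A :=
    funext fun _ => Fin.sum_univ_add _
  simp only [reducedRow, schurCompl, even_part, odd_part, Matrix.add_vecMul, Matrix.vecMul_sub,
    Matrix.vecMul_vecMul, Ring.mul_inverse_cancel _ hX, Matrix.vecMul_one]
  abel

theorem castAdd_ne_natAdd (i : Fin k) (j : Fin l) : Fin.castAdd l i ≠ Fin.natAdd k j :=
  Fin.ne_of_lt (i.2.trans_le (Nat.le_add_right k j))

theorem Xblk_updateRow_natAdd (i : Fin l) (y : Fin (k + l) → SuperAlg n) :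
    Xblk n k l (A.updateRow (Fin.natAdd k i) y) = Xblk n k l A := by
  ext p q
  simp only [Xblk, Matrix.updateRow_ne (castAdd_ne_natAdd p i)]

theorem alphaBlk_updateRow_natAdd (i : Fin l) (y : Fin (k + l) → SuperAlg n) :
    alphaBlk n k l (A.updateRow (Fin.natAdd k i) y) = alphaBlk n k l A := by
  ext p q
  simp only [alphaBlk, Matrix.updateRow_ne (castAdd_ne_natAdd p i)]

theorem schurCompl_updateRow_natAdd (i : Fin l) (y : Fin (k + l) → SuperAlg n) :
    schurCompl (A.updateRow (Fin.natAdd k i) y) =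
      (schurCompl A).updateRow i (reducedRow A y) := by
  have reducedRow_eq : reducedRow (A.updateRow (Fin.natAdd k i) y) = reducedRow A := by
    ext y j
    simp only [reducedRow, Xblk_updateRow_natAdd, alphaBlk_updateRow_natAdd]
  ext p q
  rw [← reducedRow_row, reducedRow_eq]
  by_cases hp : p = i
  · subst hp
    simp
  · have hp' : Fin.natAdd k p ≠ Fin.natAdd k i := by simpa using hp
    rw [Matrix.updateRow_ne hp', Matrix.updateRow_ne hp, reducedRow_row]

theorem berStar_eq (A : Matrix (Fin (k + l)) (Fin (k + l)) (SuperAlg n)) :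
    berStar n k l A = Ring.inverse (ncdet (Xblk n k l A)) * ncdet (schurCompl A) :=
  rfl

namespace IsEvenSupermatrix

theorem Xblk_mem_center (hA : IsEvenSupermatrix n k l A) (i j : Fin k) :
    Xblk n k l A i j ∈ Subring.center (SuperAlg n) :=
  mem_center_of_mem_even (hA.1 i j)

theorem Yblk_mem_center (hA : IsEvenSupermatrix n k l A) (i j : Fin l) :
    Yblk n k l A i j ∈ Subring.center (SuperAlg n) :=
  mem_center_of_mem_even (hA.2.1 i j)

theorem schurCompl_mem_center (hA : IsEvenSupermatrix n k l A) (i j : Fin l) :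
    schurCompl A i j ∈ Subring.center (SuperAlg n) := by
  have hXinv := matrix_ringInverse_mem_center hA.Xblk_mem_center
  have hYcenter := hA.Yblk_mem_center
  obtain ⟨-, -, hα, hβ⟩ := hA
  exact sub_mem (hYcenter i j) (matrix_mul_mul_mem_center_of_mem_odd hβ hXinv hα i j)

theorem isUnit_ncdet_schurCompl (hA : IsEvenSupermatrix n k l A)
    (hY : IsUnit (Yblk n k l A)) : IsUnit (ncdet (schurCompl A)) := by
  have hXinv := matrix_ringInverse_mem_center hA.Xblk_mem_center
  have hYcenter := hA.Yblk_mem_center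
  obtain ⟨-, -, hα, hβ⟩ := hA
  exact isUnit_ncdet_sub_of_isNilpotent hYcenter
    (matrix_mul_mul_mem_center_of_mem_odd hβ hXinv hα) hY
    (isNilpotent_matrix_mul_mul_of_mem_odd hβ hXinv hα)

theorem isUnit_berStar (hA : IsEvenSupermatrix n k l A)
    (hX : IsUnit (Xblk n k l A)) (hY : IsUnit (Yblk n k l A)) :
    IsUnit (berStar n k l A) :=
  (isUnit_ncdet hA.Xblk_mem_center hX).ringInverse.mul (hA.isUnit_ncdet_schurCompl hY)

theorem ncdet_schurCompl_updateRow_reducedRow (hA : IsEvenSupermatrix n k l A)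
    (hX : IsUnit (Xblk n k l A)) (x : Fin (k + l) → SuperAlg n) (i : Fin l) :
    ncdet ((schurCompl A).updateRow i (reducedRow A (x ᵥ* A))) =
      x (Fin.natAdd k i) * ncdet (schurCompl A) := by
  rw [reducedRow_vecMul hX, ncdet_updateRow_vecMul_of_mem_center hA.schurCompl_mem_center,
    Function.comp_apply]

theorem berStar_updateRow_vecMul (hA : IsEvenSupermatrix n k l A)
    (hX : IsUnit (Xblk n k l A)) (x : Fin (k + l) → SuperAlg n) (i : Fin l) :
    berStar n k l (A.updateRow (Fin.natAdd k i) (x ᵥ* A)) =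
      x (Fin.natAdd k i) * berStar n k l A := by
  have hdet := ringInverse_mem_center (ncdet_mem_center hA.Xblk_mem_center)
  rw [berStar_eq, berStar_eq, Xblk_updateRow_natAdd, schurCompl_updateRow_natAdd,
    hA.ncdet_schurCompl_updateRow_reducedRow hX, ← mul_assoc, ← mul_assoc,
    Subring.mem_center_iff.1 hdet]

end IsEvenSupermatrix

end Supermatrix

/-- **super Cramer's rule, odd positions.**  Let `A = [[X, α],[β, Y]]` be an
invertible even `(k|l+1)`-supermatrix over `Λ` (equivalently, `X` and `Y` are both invertible)
and let `x·A = y` for row vectors `x`, `y`.  Then for every odd index `i`: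
`x_i·det(Y − β·X⁻¹·α) = Σ_j (y″ − y′·X⁻¹·α)_j·C_{(i−k)j}`, where `C_{(i−k)j}` is the
`(i−k, j)`-cofactor of `Y − β·X⁻¹·α`; equivalently, `x_i = ber*(A_i(y))·ber*(A)⁻¹`, where
`A_i(y)` is obtained by replacing the `i`-th row of `A` with `y`. -/
theorem statement7 (n k l : ℕ)
    (A : Matrix (Fin (k + (l + 1))) (Fin (k + (l + 1))) (SuperAlg n))
    (hA : IsEvenSupermatrix n k (l + 1) A)
    (hX : IsUnit (Xblk n k (l + 1) A)) (hY : IsUnit (Yblk n k (l + 1) A))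
    (x y : Fin (k + (l + 1)) → SuperAlg n)
    (hxy : ∀ j, ∑ p, x p * A p j = y j)
    (i : Fin (l + 1)) :
    x (Fin.natAdd k i) *
        ncdet (Yblk n k (l + 1) A -
          betaBlk n k (l + 1) A * Ring.inverse (Xblk n k (l + 1) A) * alphaBlk n k (l + 1) A)
      = (∑ j : Fin (l + 1),
          (y (Fin.natAdd k j) -
            ∑ r : Fin k, ∑ q : Fin k,
              y (Fin.castAdd (l + 1) r) * Ring.inverse (Xblk n k (l + 1) A) r q *
                alphaBlk n k (l + 1) A q j) *
          (((-1 : ℤ) ^ ((i : ℕ) + (j : ℕ))) •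
            ncdet ((Yblk n k (l + 1) A -
              betaBlk n k (l + 1) A * Ring.inverse (Xblk n k (l + 1) A) *
                alphaBlk n k (l + 1) A).submatrix i.succAbove j.succAbove))) ∧
    x (Fin.natAdd k i)
      = berStar n k (l + 1) (A.updateRow (Fin.natAdd k i) y) *
          Ring.inverse (berStar n k (l + 1) A) := by
  obtain rfl : x ᵥ* A = y := funext hxy
  constructor
  · simp only [← reducedRow_apply]
    exact (hA.ncdet_schurCompl_updateRow_reducedRow hX x i).symm.trans
      (ncdet_updateRow_eq_sum_cofactor hA.schurCompl_mem_center i _)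
  · rw [hA.berStar_updateRow_vecMul hX, mul_assoc,
      Ring.mul_inverse_cancel _ (hA.isUnit_berStar hX hY), mul_one]

end
end

section
/- Let R be an associative unital (possibly noncommutative) ring, let A = (a_{pq}) be an invertible m×m matrix over R, and let i, j be indices such that the (m−1)×(m−1) matrix A^{ij}, obtained from A by deleting row i and column j, is invertible. Then the (j,i) entry of A⁻¹ is invertible in R, and ((A⁻¹)_{ji})⁻¹ = a_{ij} − Σ_{p≠j, q≠i} a_{ip}·((A^{ij})⁻¹)_{pq}·a_{qj}, where the rows of (A^{ij})⁻¹ are indexed by {1,…,m}∖{j} and its columns by {1,…,m}∖{i}. (The right-hand side is the quasideterminant |A|_{ij}.) -/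
noncomputable section

/-- The canonical (order-preserving) embedding of `Fin N` onto the complement of `i` in
`Fin M`, where `M = N + 1`; `skipIdx h i p` is the `p`-th element of `{0, …, M-1} ∖ {i}`. -/
def skipIdx {N M : ℕ} (h : N + 1 = M) (i : Fin M) : Fin N → Fin M :=
  fun p => Fin.cast h ((Fin.cast h.symm i).succAbove p)

/-- The matrix `A^{ij}` obtained from the square matrix `A` by deleting row `i` and column `j`,
with rows and columns reindexed by the order-preserving identifications with `Fin N`. -/
def delRC {R : Type*} [Ring R] {N M : ℕ} (h : N + 1 = M) (A : Matrix (Fin M) (Fin M) R)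
    (i j : Fin M) : Matrix (Fin N) (Fin N) R :=
  fun p q => A (skipIdx h i p) (skipIdx h j q)

/-- The Gelfand–Retakh quasideterminant
`|A|_{ij} = a_{ij} − Σ_{p≠j, q≠i} a_{ip}·((A^{ij})⁻¹)_{pq}·a_{qj}`, where the rows of
`(A^{ij})⁻¹` are indexed by the complement of `j` and its columns by the complement of `i`
(both via their order-preserving identifications with `Fin N`). -/
def quasidet {R : Type*} [Ring R] {N M : ℕ} (h : N + 1 = M) (A : Matrix (Fin M) (Fin M) R)
    (i j : Fin M) : R :=
  A i j - ∑ p : Fin N, ∑ q : Fin N,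
    A i (skipIdx h j p) * (Ring.inverse (delRC h A i j)) p q * A (skipIdx h i q) j

/-!
Moving row `i` and column `j` to the end turns `A^{ij}` into the upper left block of `A`, the
quasideterminant `|A|_{ij}` into the Schur complement of that block, and the entry `(A⁻¹)_{ji}` into
the lower right block of `A⁻¹`. Eliminating the off-diagonal block of `A⁻¹` from the block equations
`A * A⁻¹ = 1` and `A⁻¹ * A = 1` shows that this lower right block is inverse to the Schur complement
on either side.
-/

/-- The Schur complement `M₂₂ - M₂₁ * M₁₁⁻¹ * M₁₂` of the upper left block of a block matrix over a
possibly noncommutative ring. Since it uses `Ring.inverse`, it is meaningful only when `M₁₁` is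
invertible. -/
def schurComplement {R n l o : Type*} [Ring R] [Fintype n] [DecidableEq n]
    (M : Matrix (n ⊕ l) (n ⊕ o) R) : Matrix l o R :=
  M.toBlocks₂₂ - M.toBlocks₂₁ * Ring.inverse M.toBlocks₁₁ * M.toBlocks₁₂

section SchurComplement

variable {R n l o : Type*} [Ring R] [Fintype n] [DecidableEq n]
  {M : Matrix (n ⊕ l) (n ⊕ o) R} {N : Matrix (n ⊕ o) (n ⊕ l) R}

theorem schurComplement_mul_toBlocks₂₂ [Fintype o] [DecidableEq l]
    (hM : IsUnit M.toBlocks₁₁) (hMN : M * N = 1) :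
    schurComplement M * N.toBlocks₂₂ = 1 := by
  rw [← M.fromBlocks_toBlocks, ← N.fromBlocks_toBlocks, Matrix.fromBlocks_multiply,
    ← Matrix.fromBlocks_one, Matrix.fromBlocks_inj] at hMN
  obtain ⟨-, upper_right, -, lower_right⟩ := hMN
  have N₁₂_eq : N.toBlocks₁₂ =
      -(Ring.inverse M.toBlocks₁₁ * (M.toBlocks₁₂ * N.toBlocks₂₂)) := by
    rw [← Matrix.mul_neg, ← eq_neg_of_add_eq_zero_left upper_right, ← Matrix.mul_assoc,
      Ring.inverse_mul_cancel _ hM, Matrix.one_mul]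
  rw [← lower_right, N₁₂_eq, schurComplement, Matrix.sub_mul, Matrix.mul_neg, neg_add_eq_sub]
  simp only [Matrix.mul_assoc]

theorem toBlocks₂₂_mul_schurComplement [Fintype l] [DecidableEq o]
    (hM : IsUnit M.toBlocks₁₁) (hNM : N * M = 1) :
    N.toBlocks₂₂ * schurComplement M = 1 := by
  rw [← M.fromBlocks_toBlocks, ← N.fromBlocks_toBlocks, Matrix.fromBlocks_multiply,
    ← Matrix.fromBlocks_one, Matrix.fromBlocks_inj] at hNM
  obtain ⟨-, -, lower_left, lower_right⟩ := hNM
  have N₂₁_eq : N.toBlocks₂₁ =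
      -(N.toBlocks₂₂ * M.toBlocks₂₁ * Ring.inverse M.toBlocks₁₁) := by
    rw [← Matrix.neg_mul, ← eq_neg_of_add_eq_zero_left lower_left, Matrix.mul_assoc,
      Ring.mul_inverse_cancel _ hM, Matrix.mul_one]
  rw [← lower_right, N₂₁_eq, schurComplement, Matrix.mul_sub, Matrix.neg_mul, neg_add_eq_sub]
  simp only [Matrix.mul_assoc]

end SchurComplement

/-- The splitting of `Fin (m + 1)` into the complement of `i`, enumerated by `i.succAbove`, and the
point `i` itself; it indexes the blocks of `pivotLast`. -/
def succAboveSumEquiv {m : ℕ} (i : Fin (m + 1)) : Fin m ⊕ Unit ≃ Fin (m + 1) :=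
  (Equiv.optionEquivSumPUnit (Fin m)).symm.trans (finSuccEquiv' i).symm

@[simp]
theorem succAboveSumEquiv_inl {m : ℕ} (i : Fin (m + 1)) (p : Fin m) :
    succAboveSumEquiv i (.inl p) = i.succAbove p := by
  simp [succAboveSumEquiv]

@[simp]
theorem succAboveSumEquiv_inr {m : ℕ} (i : Fin (m + 1)) (u : Unit) :
    succAboveSumEquiv i (.inr u) = i := by
  simp [succAboveSumEquiv]

/-- The matrix `A` with row `i` and column `j` moved to the end, as a block matrix whose lower right
block is the `1 × 1` matrix with entry `A i j`. It turns minors and quasideterminants into blocks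
and Schur complements. -/
def pivotLast {α : Type*} {m : ℕ} (A : Matrix (Fin (m + 1)) (Fin (m + 1)) α)
    (i j : Fin (m + 1)) : Matrix (Fin m ⊕ Unit) (Fin m ⊕ Unit) α :=
  A.submatrix (succAboveSumEquiv i) (succAboveSumEquiv j)

theorem toBlocks₂₂_pivotLast {α : Type*} {m : ℕ} (A : Matrix (Fin (m + 1)) (Fin (m + 1)) α)
    (i j : Fin (m + 1)) : (pivotLast A i j).toBlocks₂₂ = .of fun _ _ => A i j := by
  ext
  simp [Matrix.toBlocks₂₂, pivotLast]

section Quasideterminant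

variable {R : Type*} [Ring R] {m : ℕ} {A B : Matrix (Fin (m + 1)) (Fin (m + 1)) R}
  {i j : Fin (m + 1)}

theorem pivotLast_mul_pivotLast_eq_one (hAB : A * B = 1) (i j : Fin (m + 1)) :
    pivotLast A i j * pivotLast B j i = 1 := by
  rw [pivotLast, pivotLast, Matrix.submatrix_mul_equiv, hAB, Matrix.submatrix_one_equiv]

theorem toBlocks₁₁_pivotLast (A : Matrix (Fin (m + 1)) (Fin (m + 1)) R) (i j : Fin (m + 1)) :
    (pivotLast A i j).toBlocks₁₁ = delRC rfl A i j := by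
  ext p q
  simp [Matrix.toBlocks₁₁, pivotLast, delRC, skipIdx]

theorem schurComplement_pivotLast (A : Matrix (Fin (m + 1)) (Fin (m + 1)) R)
    (i j : Fin (m + 1)) :
    schurComplement (pivotLast A i j) = .of fun _ _ => quasidet rfl A i j := by
  ext
  rw [schurComplement, toBlocks₁₁_pivotLast, toBlocks₂₂_pivotLast, Matrix.of_apply, quasidet,
    Finset.sum_comm]
  simp [Matrix.mul_apply, Finset.sum_mul, Matrix.toBlocks₁₂, Matrix.toBlocks₂₁, pivotLast, skipIdx]

theorem quasidet_mul_apply_eq_one (hij : IsUnit (delRC rfl A i j)) (hAB : A * B = 1) :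
    quasidet rfl A i j * B j i = 1 := by
  rw [← toBlocks₁₁_pivotLast] at hij
  have schur_mul := schurComplement_mul_toBlocks₂₂ hij (pivotLast_mul_pivotLast_eq_one hAB i j)
  rw [schurComplement_pivotLast, toBlocks₂₂_pivotLast] at schur_mul
  simpa [Matrix.mul_apply] using congrFun₂ schur_mul () ()

theorem apply_mul_quasidet_eq_one (hij : IsUnit (delRC rfl A i j)) (hBA : B * A = 1) :
    B j i * quasidet rfl A i j = 1 := by
  rw [← toBlocks₁₁_pivotLast] at hij
  have mul_schur := toBlocks₂₂_mul_schurComplement hij (pivotLast_mul_pivotLast_eq_one hBA j i)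
  rw [schurComplement_pivotLast, toBlocks₂₂_pivotLast] at mul_schur
  simpa [Matrix.mul_apply] using congrFun₂ mul_schur () ()

end Quasideterminant

/-- Let `R` be an associative unital (possibly noncommutative) ring, let `A`
be an invertible `m×m` matrix over `R`, and let `i`, `j` be indices such that the matrix
`A^{ij}` obtained by deleting row `i` and column `j` is invertible.  Then the `(j,i)` entry of
`A⁻¹` is invertible in `R` and `((A⁻¹)_{ji})⁻¹` equals the quasideterminant `|A|_{ij}`. -/
theorem statement8 {R : Type*} [Ring R] {m : ℕ} (A : Matrix (Fin (m + 1)) (Fin (m + 1)) R)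
    (hA : IsUnit A) (i j : Fin (m + 1)) (hij : IsUnit (delRC rfl A i j)) :
    IsUnit ((Ring.inverse A) j i) ∧
    Ring.inverse ((Ring.inverse A) j i) = quasidet rfl A i j := by
  let entry : Rˣ :=
    { val := Ring.inverse A j i
      inv := quasidet rfl A i j
      val_inv := apply_mul_quasidet_eq_one hij (Ring.inverse_mul_cancel A hA)
      inv_val := quasidet_mul_apply_eq_one hij (Ring.mul_inverse_cancel A hA) }
  exact ⟨entry.isUnit, Ring.inverse_unit entry⟩

end
end

section
/- The exterior algebra Λ is injective as a left module over itself: for every left Λ-module M, every submodule N ⊆ M, and every left Λ-linear map φ : N → Λ, there exists a left Λ-linear map ψ : M → Λ extending φ. -/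
/-!
Statement 9: the exterior algebra `Λ = ⋀ ℂⁿ` is injective as a left module over itself: every
left `Λ`-linear map from a submodule `N` of a left `Λ`-module `M` to `Λ` extends to `M`.
-/

noncomputable section

/-- `Λ` regarded as a left module over itself by left multiplication.  (This is exactly
Mathlib's canonical `Semiring.toModule`; we register it explicitly since instance search
does not fire automatically for the `CliffordAlgebra`-based definition.) -/
instance (n : ℕ) : Module (SuperAlg n) (SuperAlg n) := Semiring.toModule

/-!
`Λ` is a Frobenius algebra: the Berezin integral `t`, which reads off the coefficient of
`β₁ ⋯ βₙ`, makes `(a, x) ↦ t (a * x)` a perfect pairing, because up to sign it matches each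
monomial with the complementary one. If `g` is a `Λ`-linear map from a left ideal `I` to `Λ`,
extend `t ∘ g` linearly to `Λ` and write the extension as `a ↦ t (a * x)`; nondegeneracy then
forces `g` to be right multiplication by `x`, which is defined on all of `Λ`. By Baer's criterion
`Λ` is injective.
-/

section Frobenius

variable {R A : Type*} [CommRing R] [Ring A] [Algebra R A]

/-- The map `x ↦ (a ↦ t (a * x))` from an algebra to its dual given by a linear functional `t`. -/
def frobeniusMap (t : A →ₗ[R] R) : A →ₗ[R] Module.Dual R A :=
  (LinearMap.mul R A).flip.compr₂ t

@[simp]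
theorem frobeniusMap_apply (t : A →ₗ[R] R) (x a : A) : frobeniusMap t x a = t (a * x) :=
  rfl

/-- A linear functional `t` on an algebra `A` is a Frobenius form if `x ↦ t (· * x)` is a bijection
from `A` to its dual. Over a field and in finite dimension this makes `A` a Frobenius algebra; no
finiteness is built into the definition. -/
def IsFrobeniusForm (t : A →ₗ[R] R) : Prop :=
  Function.Bijective (frobeniusMap t)

namespace IsFrobeniusForm

variable {t : A →ₗ[R] R}

theorem ext (ht : IsFrobeniusForm t) {x y : A} (h : ∀ a, t (a * x) = t (a * y)) : x = y :=
  ht.injective (LinearMap.ext h)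

theorem exists_forall_apply_eq_mul (ht : IsFrobeniusForm t) [Module.Injective R R]
    (I : Ideal A) (g : I →ₗ[A] A) : ∃ x, ∀ y : I, g y = y * x := by
  obtain ⟨τ, hτ⟩ := Module.Injective.extension_property R R _ _
    (I.restrictScalars R).subtype Subtype.val_injective (t ∘ₗ g.restrictScalars R)
  obtain ⟨x, hx⟩ := ht.surjective τ
  refine ⟨x, fun y => ht.ext fun a => ?_⟩
  calc
    t (a * g y) = t (g (a • y)) := by rw [map_smul, smul_eq_mul]
    _ = τ (a * y) := (LinearMap.congr_fun hτ (a • y)).symm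
    _ = t (a * (y * x)) := by rw [← hx, frobeniusMap_apply, mul_assoc]

theorem module_injective (ht : IsFrobeniusForm t) [Module.Injective R R] :
    Module.Injective A A := by
  refine Module.Baer.injective fun I g => ?_
  obtain ⟨x, hx⟩ := ht.exists_forall_apply_eq_mul I g
  exact ⟨LinearMap.toSpanSingleton A A x, fun y hy => (hx ⟨y, hy⟩).symm⟩

end IsFrobeniusForm

end Frobenius

section Berezin

variable {R V ι : Type*} [CommRing R] [AddCommGroup V] [Module R V]
variable [LinearOrder ι] (b : Module.Basis ι R V)

theorem exteriorAlgebra_basis_mul_of_not_disjoint {s t : Finset ι} (h : ¬Disjoint s t) :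
    b.ExteriorAlgebra s * b.ExteriorAlgebra t = 0 :=
  ExteriorAlgebra.basis_mul_of_not_disjoint b
    (Set.powersetCard.ofCard (s := s) rfl) (Set.powersetCard.ofCard (s := t) rfl) h

theorem exists_exteriorAlgebra_basis_mul_of_disjoint {s t : Finset ι} (h : Disjoint s t) :
    ∃ ε : ℤˣ, b.ExteriorAlgebra s * b.ExteriorAlgebra t = ε • b.ExteriorAlgebra (s ∪ t) := by
  rw [← Finset.disjUnion_eq_union s t h]
  exact ⟨_, ExteriorAlgebra.basis_mul_of_disjoint b
    (Set.powersetCard.ofCard (s := s) rfl) (Set.powersetCard.ofCard (s := t) rfl) h⟩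

variable [Fintype ι]

/-- The Berezin integral on the exterior algebra relative to a basis: the coefficient of the
product of all basis vectors in increasing order. -/
def berezinIntegral : ExteriorAlgebra R V →ₗ[R] R :=
  b.ExteriorAlgebra.coord Finset.univ

theorem berezinIntegral_basis (s : Finset ι) :
    berezinIntegral b (b.ExteriorAlgebra s) = if s = Finset.univ then 1 else 0 := by
  rw [berezinIntegral, Module.Basis.coord_apply, Module.Basis.repr_self, Finsupp.single_apply]

theorem isUnit_berezinIntegral_basis_compl_mul_basis (s : Finset ι) :
    IsUnit (berezinIntegral b (b.ExteriorAlgebra sᶜ * b.ExteriorAlgebra s)) := by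
  obtain ⟨ε, hε⟩ := exists_exteriorAlgebra_basis_mul_of_disjoint b (disjoint_compl_left (a := s))
  rw [hε, Finset.union_comm, Finset.union_compl, Units.smul_def, map_zsmul, berezinIntegral_basis,
    if_pos rfl, zsmul_one]
  exact ε.isUnit.map (Int.castRingHom R)

theorem berezinIntegral_basis_mul_basis_eq_zero {s t : Finset ι} (h : s ≠ tᶜ) :
    berezinIntegral b (b.ExteriorAlgebra s * b.ExteriorAlgebra t) = 0 := by
  by_cases hst : Disjoint s t
  · have hunion : s ∪ t ≠ Finset.univ := fun hu =>
      h (IsCompl.eq_compl ⟨hst, codisjoint_iff.mpr hu⟩)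
    obtain ⟨ε, hε⟩ := exists_exteriorAlgebra_basis_mul_of_disjoint b hst
    rw [hε, Units.smul_def, map_zsmul, berezinIntegral_basis, if_neg hunion, smul_zero]
  · rw [exteriorAlgebra_basis_mul_of_not_disjoint b hst, map_zero]

theorem frobeniusMap_berezinIntegral_basis (s : Finset ι) :
    frobeniusMap (berezinIntegral b) (b.ExteriorAlgebra s) =
      berezinIntegral b (b.ExteriorAlgebra sᶜ * b.ExteriorAlgebra s) •
        b.ExteriorAlgebra.dualBasis sᶜ := by
  refine b.ExteriorAlgebra.ext fun u => ?_
  rw [frobeniusMap_apply, LinearMap.smul_apply, Module.Basis.dualBasis_apply_self, smul_eq_mul]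
  split_ifs with hu
  · rw [hu, mul_one]
  · rw [mul_zero, berezinIntegral_basis_mul_basis_eq_zero b hu]

theorem isFrobeniusForm_berezinIntegral : IsFrobeniusForm (berezinIntegral b) := by
  let dual := (b.ExteriorAlgebra.dualBasis.reindex compl_involutive.toPerm).isUnitSMul
    (isUnit_berezinIntegral_basis_compl_mul_basis b)
  have hdual : frobeniusMap (berezinIntegral b) =
      (b.ExteriorAlgebra.equiv dual (Equiv.refl _)).toLinearMap :=
    b.ExteriorAlgebra.ext fun s => by
      simp [dual, frobeniusMap_berezinIntegral_basis, Module.Basis.isUnitSMul_apply]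
  rw [IsFrobeniusForm, hdual]
  exact LinearEquiv.bijective _

end Berezin

theorem exteriorAlgebra_module_injective (R V : Type*) [CommRing R] [Module.Injective R R]
    [AddCommGroup V] [Module R V] [Module.Free R V] [Module.Finite R V] :
    Module.Injective (ExteriorAlgebra R V) (ExteriorAlgebra R V) := by
  let b := Module.Free.chooseBasis R V
  let e := Fintype.equivFin (Module.Free.ChooseBasisIndex R V)
  exact (isFrobeniusForm_berezinIntegral (b.reindex e)).module_injective

theorem statement9_general {R V M : Type*} [CommRing R] [Module.Injective R R]
    [AddCommGroup V] [Module R V] [Module.Free R V] [Module.Finite R V]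
    [AddCommGroup M] [Module (ExteriorAlgebra R V) M] (N : Submodule (ExteriorAlgebra R V) M)
    (φ : N →ₗ[ExteriorAlgebra R V] ExteriorAlgebra R V) :
    ∃ ψ : M →ₗ[ExteriorAlgebra R V] ExteriorAlgebra R V, ∀ x : N, ψ x = φ x := by
  have := exteriorAlgebra_module_injective R V
  obtain ⟨ψ, hψ⟩ := Module.Injective.extension_property (ExteriorAlgebra R V) _ _ _
    N.subtype Subtype.val_injective φ
  exact ⟨ψ, LinearMap.congr_fun hψ⟩

/-- The exterior algebra `Λ` is injective as a left module over itself: for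
every left `Λ`-module `M`, every submodule `N ⊆ M`, and every left `Λ`-linear map `φ : N → Λ`,
there is a left `Λ`-linear map `ψ : M → Λ` extending `φ`. -/
theorem statement9 (n : ℕ) (M : Type*) [AddCommGroup M] [Module (SuperAlg n) M]
    (N : Submodule (SuperAlg n) M) (φ : N →ₗ[SuperAlg n] SuperAlg n) :
    ∃ ψ : M →ₗ[SuperAlg n] SuperAlg n, ∀ x : N, ψ x = φ x := by
  have : Module.Injective ℂ ℂ := Module.injective_of_isSemisimpleRing ℂ ℂ
  exact statement9_general N φ

end
end

section
/- Let φ : Λᵃ → Λᵇ be a homomorphism of free left Λ-modules of finite rank whose image is contained in 𝔪·Λᵇ. Then the following are equivalent: (i) φ = 0; (ii) the cokernel Λᵇ/φ(Λᵃ) is a free Λ-module; (iii) the kernel of φ is a free Λ-module. -/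
/-!
Statement 12: for a homomorphism `φ : Λᵃ → Λᵇ` of free `Λ`-modules of finite rank whose image
lies in `𝔪·Λᵇ` (where `𝔪` is the kernel of the augmentation `Λ → ℂ`), the following are
equivalent: `φ = 0`; the cokernel of `φ` is a free `Λ`-module; the kernel of `φ` is a free
`Λ`-module.
-/

noncomputable section

/-- The maximal ideal `𝔪` of nilpotents of `Λ`: the (two-sided) ideal generated by
`β₁, …, βₙ`, i.e. the kernel of the augmentation `Λ → ℂ`. -/
def mIdeal (n : ℕ) : Ideal (SuperAlg n) :=
  RingHom.ker (ExteriorAlgebra.algebraMapInv (R := ℂ) (M := Fin n → ℂ))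

/-!
Write `𝔪` for the augmentation ideal, a nilpotent two-sided ideal.

If the cokernel is free, then `N = range φ` is a direct summand of the target, and projecting
`N ≤ 𝔪 • ⊤` onto `N` gives `N ≤ 𝔪 • N`, so `N = 0` by Nakayama.

For the kernel, compare the submodules killed by `𝔪`. An element of `Λ` killed by `𝔪` on the left
is killed by `𝔪` on the right, since `v x = x' v` for a generator `v` and the parity involution `x'`
of `x`. So `φ` vanishes on every `x` with `𝔪 x = 0`: the kernel `K` contains
the whole `𝔪`-torsion of `Λᵃ`. If `K` is free of rank `r`, its `𝔪`-torsion has length `r * ℓ`, where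
`ℓ > 0` is the length of the `𝔪`-torsion of `Λ`, so `a * ℓ ≤ r * ℓ`. Hence `a ≤ r`, and comparing
the lengths of `K` and `Λᵃ` gives `K = Λᵃ`.
-/

section IdealSMul

variable {A : Type*} [Ring A] {I : Ideal A}
variable {M : Type*} [AddCommGroup M] [Module A M]

theorem eq_bot_of_le_smul_of_isNilpotent (hI : IsNilpotent I) {N : Submodule A M}
    (hN : N ≤ I • N) : N = ⊥ := by
  have le_pow_smul (k : ℕ) : N ≤ I ^ k • N := by
    induction k with
    | zero => rw [Submodule.pow_zero, Ideal.one_eq_top, Submodule.top_smul]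
    | succ k ih =>
      calc N ≤ I ^ k • N := ih
        _ ≤ I ^ k • I • N := smul_mono_right _ hN
        _ = I ^ (k + 1) • N := by rw [Submodule.pow_succ, Submodule.mul_smul]
  obtain ⟨k, hk⟩ := hI
  rw [eq_bot_iff]
  simpa only [hk, Submodule.zero_eq_bot, Submodule.bot_smul] using le_pow_smul k

theorem eq_bot_of_le_smul_top_of_projective_quotient (hI : IsNilpotent I) {N : Submodule A M}
    (hN : N ≤ I • ⊤) [Module.Projective A (M ⧸ N)] : N = ⊥ := by
  obtain ⟨s, hs⟩ := Module.projective_lifting_property N.mkQ LinearMap.id N.mkQ_surjective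
  let p : M →ₗ[A] M := LinearMap.id - s ∘ₗ N.mkQ
  have range_p_le : LinearMap.range p ≤ N := by
    rintro _ ⟨x, rfl⟩
    rw [← Submodule.Quotient.mk_eq_zero, ← Submodule.mkQ_apply]
    simpa [p, sub_eq_zero] using (LinearMap.congr_fun hs (N.mkQ x)).symm
  have p_apply_of_mem {x : M} (hx : x ∈ N) : p x = x := by
    simp [p, (Submodule.Quotient.mk_eq_zero N).mpr hx]
  refine eq_bot_of_le_smul_of_isNilpotent hI ?_
  calc N ≤ (I • ⊤ : Submodule A M).map p := fun x hx => ⟨x, hN hx, p_apply_of_mem hx⟩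
    _ = I • LinearMap.range p := by rw [Submodule.map_smul'', Submodule.map_top]
    _ ≤ I • N := smul_mono_right _ range_p_le

theorem mem_smul_top_of_forall_apply_mem {ι : Type*} [Finite ι] {x : ι → A}
    (hx : ∀ i, x i ∈ I) : x ∈ (I • ⊤ : Submodule A (ι → A)) := by
  classical
  have := Fintype.ofFinite ι
  rw [pi_eq_sum_univ' x]
  exact sum_mem fun i _ => Submodule.smul_mem_smul (hx i) Submodule.mem_top

theorem smul_eq_zero_of_mem_smul_top {c : A} (hc : ∀ r ∈ I, c * r = 0) {y : M}
    (hy : y ∈ (I • ⊤ : Submodule A M)) : c • y = 0 := by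
  induction hy using Submodule.smul_induction_on' with
  | smul r hr x _ => rw [smul_smul, hc r hr, zero_smul]
  | add x _ y _ hx hy => rw [smul_add, hx, hy, add_zero]

end IdealSMul

section Torsion

variable {A : Type*} [Ring A] (I : Ideal A) [I.IsTwoSided]

/-- The `I`-torsion of a left module `M` over a noncommutative ring: the elements killed by every
element of `I`. It is a submodule because `I` is two-sided. -/
def torsionByIdeal (M : Type*) [AddCommGroup M] [Module A M] : Submodule A M where
  carrier := {x | ∀ r ∈ I, r • x = 0}
  add_mem' hx hy r hr := by rw [smul_add, hx r hr, hy r hr, add_zero]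
  zero_mem' _ _ := smul_zero _
  smul_mem' c x hx r hr := by rw [← mul_smul]; exact hx _ (I.mul_mem_right c hr)

variable {I} {M N : Type*} [AddCommGroup M] [Module A M] [AddCommGroup N] [Module A N]

theorem le_torsionByIdeal_iff {P : Submodule A M} : P ≤ torsionByIdeal I M ↔ I • P = ⊥ := by
  rw [eq_bot_iff, Submodule.smul_le]
  exact ⟨fun h r hr x hx => h hx r hr, fun h x hx r hr => h r hr x hx⟩

theorem map_mem_torsionByIdeal (f : M →ₗ[A] N) {x : M} (hx : x ∈ torsionByIdeal I M) :
    f x ∈ torsionByIdeal I N := fun r hr => by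
  rw [← map_smul, hx r hr, map_zero]

theorem torsionByIdeal_ne_bot [Nontrivial M] (hI : IsNilpotent I) : torsionByIdeal I M ≠ ⊥ := by
  intro torsion_eq_bot
  have pow_smul_top_ne_bot (k : ℕ) : I ^ k • (⊤ : Submodule A M) ≠ ⊥ := by
    induction k with
    | zero =>
      rw [Submodule.pow_zero, Ideal.one_eq_top, Submodule.top_smul]
      exact top_ne_bot
    | succ k ih =>
      rwa [Ideal.IsTwoSided.pow_succ, Submodule.mul_smul, Ne, ← le_torsionByIdeal_iff,
        torsion_eq_bot, le_bot_iff]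
  obtain ⟨k, hk⟩ := hI
  exact pow_smul_top_ne_bot k (by rw [hk, Submodule.zero_eq_bot, Submodule.bot_smul])

/-- A basis identifies the `I`-torsion of a free module with tuples of `I`-torsion elements of the
ring. -/
def torsionByIdealEquivFun {ι : Type*} [Fintype ι] (b : Module.Basis ι A M) :
    torsionByIdeal I M ≃ₗ[A] (ι → torsionByIdeal I A) where
  toFun x i := ⟨b.coord i x, map_mem_torsionByIdeal (b.coord i) x.2⟩
  map_add' x y := by ext; simp
  map_smul' c x := by ext; simp
  invFun f := ⟨b.equivFun.symm fun i => f i, map_mem_torsionByIdeal b.equivFun.symm.toLinearMap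
    fun r hr => funext fun i => (f i).2 r hr⟩
  left_inv x := Subtype.ext (b.equivFun.symm_apply_apply (x : M))
  right_inv f := funext fun i =>
    Subtype.ext (congrFun (b.equivFun.apply_symm_apply fun j => (f j : A)) i)

theorem length_torsionByIdeal_of_free [StrongRankCondition A] [Module.Free A M]
    [Module.Finite A M] :
    Module.length A (torsionByIdeal I M) =
      Module.finrank A M * Module.length A (torsionByIdeal I A) := by
  rw [(torsionByIdealEquivFun (Module.Free.chooseBasis A M)).length_eq, Module.length_pi,
    ENat.card_eq_coe_fintype_card, Module.finrank_eq_card_chooseBasisIndex]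

theorem finrank_le_finrank_of_torsionByIdeal_le [IsArtinianRing A] [Nontrivial A]
    (hI : IsNilpotent I) [Module.Free A M] [Module.Finite A M] {K : Submodule A M}
    [Module.Free A K] (hK : torsionByIdeal I M ≤ K) :
    Module.finrank A M ≤ Module.finrank A K := by
  let incl : torsionByIdeal I M →ₗ[A] torsionByIdeal I K :=
    (Submodule.inclusion hK).codRestrict _ fun x r hr => Subtype.ext (x.2 r hr)
  have incl_injective : Function.Injective incl :=
    (LinearMap.injective_codRestrict_iff _).mpr (Submodule.inclusion_injective hK)
  have length_le := Module.length_le_of_injective incl incl_injective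
  have : Nontrivial (torsionByIdeal I A) :=
    Submodule.nontrivial_iff_ne_bot.mpr (torsionByIdeal_ne_bot hI)
  rw [length_torsionByIdeal_of_free (M := M), length_torsionByIdeal_of_free (M := K),
    ENat.mul_le_mul_right_iff Module.length_pos.ne' Module.length_ne_top] at length_le
  exact_mod_cast length_le

theorem eq_top_of_torsionByIdeal_le [IsArtinianRing A] (hI : IsNilpotent I) [Module.Free A M]
    [Module.Finite A M] {K : Submodule A M} [Module.Free A K] (hK : torsionByIdeal I M ≤ K) :
    K = ⊤ := by
  nontriviality A
  by_contra hne
  refine (Submodule.length_lt hne).not_ge ?_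
  rw [Module.length_of_free_of_finite A M, Module.length_of_free_of_finite A K]
  gcongr
  exact finrank_le_finrank_of_torsionByIdeal_le hI hK

theorem torsionByIdeal_le_ker (hann : ∀ s : A, (∀ r ∈ I, r * s = 0) → ∀ r ∈ I, s * r = 0)
    [Module.Free A M] {φ : M →ₗ[A] N} (hφ : LinearMap.range φ ≤ I • ⊤) :
    torsionByIdeal I M ≤ LinearMap.ker φ := by
  intro x hx
  let b := Module.Free.chooseBasis A M
  rw [LinearMap.mem_ker, ← b.linearCombination_repr x, Finsupp.linearCombination_apply,
    map_finsuppSum]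
  refine Finset.sum_eq_zero fun i _ => ?_
  change φ (b.coord i x • b i) = 0
  rw [map_smul]
  have coord_mem : b.coord i x ∈ torsionByIdeal I A := map_mem_torsionByIdeal (b.coord i) hx
  exact smul_eq_zero_of_mem_smul_top (hann _ coord_mem) (hφ ⟨b i, rfl⟩)

end Torsion

section FreeKernelCokernel

variable {A : Type*} [Ring A] {I : Ideal A}
variable {M N : Type*} [AddCommGroup M] [Module A M] [AddCommGroup N] [Module A N]
variable {φ : M →ₗ[A] N}

theorem eq_zero_iff_free_quotient_range [Module.Free A N] (hI : IsNilpotent I)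
    (hφ : LinearMap.range φ ≤ I • ⊤) : φ = 0 ↔ Module.Free A (N ⧸ LinearMap.range φ) := by
  rw [← LinearMap.range_eq_bot]
  exact ⟨fun h => .of_equiv (Submodule.quotEquivOfEqBot _ h).symm,
    fun _ => eq_bot_of_le_smul_top_of_projective_quotient hI hφ⟩

theorem eq_zero_iff_free_ker [IsArtinianRing A] [Module.Free A M] [Module.Finite A M]
    [I.IsTwoSided] (hI : IsNilpotent I)
    (hann : ∀ s : A, (∀ r ∈ I, r * s = 0) → ∀ r ∈ I, s * r = 0)
    (hφ : LinearMap.range φ ≤ I • ⊤) : φ = 0 ↔ Module.Free A (LinearMap.ker φ) := by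
  rw [← LinearMap.ker_eq_top]
  exact ⟨fun h => .of_equiv (LinearEquiv.ofTop _ h).symm,
    fun _ => eq_top_of_torsionByIdeal_le hI (torsionByIdeal_le_ker hann hφ)⟩

end FreeKernelCokernel

section ExteriorAlgebra

open ExteriorAlgebra (ι algebraMapInv)
open CliffordAlgebra (involute involute_ι involute_involute)
open scoped Pointwise

variable {R : Type*} [CommRing R] {M : Type*} [AddCommGroup M] [Module R M]

variable (R M) in
/-- The augmentation ideal of the exterior algebra: the kernel of the projection onto degree
zero. -/
def exteriorAugmentationIdeal : Ideal (ExteriorAlgebra R M) :=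
  RingHom.ker (algebraMapInv (R := R) (M := M))

instance : (exteriorAugmentationIdeal R M).IsTwoSided :=
  inferInstanceAs (RingHom.ker (algebraMapInv (R := R) (M := M))).IsTwoSided

theorem ι_mem_exteriorAugmentationIdeal (v : M) : ι R v ∈ exteriorAugmentationIdeal R M := by
  simp [exteriorAugmentationIdeal, algebraMapInv, RingHom.mem_ker]

theorem sub_algebraMap_algebraMapInv_mem_span_range_ι (x : ExteriorAlgebra R M) :
    x - algebraMap R _ (algebraMapInv x) ∈ Ideal.span (Set.range (ι R (M := M))) := by
  induction x using ExteriorAlgebra.induction with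
  | algebraMap r => simp
  | ι v => simpa [algebraMapInv] using Ideal.subset_span (Set.mem_range_self v)
  | mul x y hx hy =>
    have split : x * y - algebraMap R _ (algebraMapInv (x * y)) =
        x * (y - algebraMap R _ (algebraMapInv y)) +
          algebraMap R _ (algebraMapInv y) * (x - algebraMap R _ (algebraMapInv x)) := by
      rw [map_mul, mul_comm (algebraMapInv x), map_mul, mul_sub, mul_sub,
        ← Algebra.commutes (algebraMapInv y) x, sub_add_sub_cancel]
    rw [split]
    exact add_mem (Ideal.mul_mem_left _ _ hy) (Ideal.mul_mem_left _ _ hx)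
  | add x y hx hy =>
    rw [map_add, map_add, add_sub_add_comm]
    exact add_mem hx hy

theorem exteriorAugmentationIdeal_eq_span_range_ι :
    exteriorAugmentationIdeal R M = Ideal.span (Set.range (ι R)) := by
  refine le_antisymm (fun x hx => ?_) (Ideal.span_le.mpr ?_)
  · have := sub_algebraMap_algebraMapInv_mem_span_range_ι x
    rwa [show algebraMapInv x = (0 : R) from hx, map_zero, sub_zero] at this
  · rintro _ ⟨v, rfl⟩
    exact ι_mem_exteriorAugmentationIdeal v

theorem ι_mul_eq_involute_mul_ι (v : M) (x : ExteriorAlgebra R M) :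
    ι R v * x = involute x * ι R v := by
  induction x using ExteriorAlgebra.induction with
  | algebraMap r => rw [AlgHom.commutes, Algebra.commutes]
  | ι w =>
    rw [involute_ι, neg_mul]
    exact eq_neg_of_add_eq_zero_left (ExteriorAlgebra.ι_add_mul_swap v w)
  | mul x y hx hy => rw [map_mul, ← mul_assoc, hx, mul_assoc, hy, mul_assoc]
  | add x y hx hy => rw [map_add, mul_add, add_mul, hx, hy]

theorem mul_ι_eq_ι_mul_involute (v : M) (x : ExteriorAlgebra R M) :
    x * ι R v = ι R v * involute x := by
  rw [ι_mul_eq_involute_mul_ι, involute_involute]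

theorem mul_eq_zero_of_exteriorAugmentationIdeal_mul_eq_zero {s : ExteriorAlgebra R M}
    (hs : ∀ r ∈ exteriorAugmentationIdeal R M, r * s = 0) :
    ∀ r ∈ exteriorAugmentationIdeal R M, s * r = 0 := by
  have mul_ι_eq_zero (v : M) : s * ι R v = 0 := by
    have := congrArg involute (hs _ (ι_mem_exteriorAugmentationIdeal v))
    rwa [map_mul, involute_ι, neg_mul, map_zero, neg_eq_zero,
      ← mul_ι_eq_ι_mul_involute] at this
  intro r hr
  rw [exteriorAugmentationIdeal_eq_span_range_ι] at hr
  induction hr using Submodule.closure_induction with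
  | zero => rw [mul_zero]
  | add r t _ _ hr ht => rw [mul_add, hr, ht, add_zero]
  | smul_mem a _ hv =>
    obtain ⟨v, rfl⟩ := hv
    rw [smul_eq_mul, mul_ι_eq_ι_mul_involute, ← mul_assoc, mul_ι_eq_zero, zero_mul]

theorem exists_exteriorPower_eq_bot [Module.Finite R M] : ∃ k : ℕ, ⋀[R]^k M = ⊥ := by
  obtain ⟨n, v, hv⟩ := Module.Finite.exists_fin (R := R) (M := M)
  refine ⟨n + 1, ?_⟩
  rw [← exteriorPower.ιMulti_family_span_fixedDegree_of_span R hv]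
  have : IsEmpty (Set.powersetCard (Fin n) (n + 1)) :=
    ⟨fun t => by simpa [t.2] using t.1.card_le_univ⟩
  rw [Set.range_eq_empty, Submodule.span_empty]

theorem exteriorAugmentationIdeal_pow_le (k : ℕ) :
    exteriorAugmentationIdeal R M ^ k ≤ Ideal.span (⋀[R]^k M : Set (ExteriorAlgebra R M)) := by
  induction k with
  | zero =>
    rw [(Ideal.eq_top_iff_one _).mpr (Ideal.subset_span _)]
    · exact le_top
    · rw [SetLike.mem_coe, ExteriorAlgebra.exteriorPower, pow_zero]
      exact Submodule.one_le.mp le_rfl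
  | succ k ih =>
    have : (Ideal.span (Set.range (ι R (M := M)))).IsTwoSided :=
      exteriorAugmentationIdeal_eq_span_range_ι (R := R) (M := M) ▸ inferInstance
    calc exteriorAugmentationIdeal R M ^ (k + 1)
        = exteriorAugmentationIdeal R M * exteriorAugmentationIdeal R M ^ k :=
          Ideal.IsTwoSided.pow_succ ..
      _ ≤ Ideal.span (Set.range (ι R)) * Ideal.span (⋀[R]^k M : Set (ExteriorAlgebra R M)) :=
          Ideal.mul_mono exteriorAugmentationIdeal_eq_span_range_ι.le ih
      _ = Ideal.span (Set.range (ι R) * (⋀[R]^k M : Set (ExteriorAlgebra R M))) :=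
          Ideal.span_mul_span' ..
      _ ≤ Ideal.span (⋀[R]^(k + 1) M : Set (ExteriorAlgebra R M)) := by
          refine Ideal.span_mono ?_
          rintro _ ⟨_, ⟨v, rfl⟩, x, hx, rfl⟩
          rw [SetLike.mem_coe, ExteriorAlgebra.exteriorPower, pow_succ']
          exact Submodule.mul_mem_mul (LinearMap.mem_range_self _ v) hx

theorem isNilpotent_exteriorAugmentationIdeal [Module.Finite R M] :
    IsNilpotent (exteriorAugmentationIdeal R M) := by
  obtain ⟨k, hk⟩ := exists_exteriorPower_eq_bot (R := R) (M := M)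
  refine ⟨k, le_bot_iff.mp ?_⟩
  simpa [hk] using exteriorAugmentationIdeal_pow_le (R := R) (M := M) k

theorem finite_exteriorAlgebra [Module.Finite R M] : Module.Finite R (ExteriorAlgebra R M) := by
  obtain ⟨n, f, hf⟩ := Module.Finite.exists_fin' R M
  have : Module.Finite R (ExteriorAlgebra R (Fin n → R)) :=
    .of_basis (Pi.basisFun R (Fin n)).ExteriorAlgebra
  exact .of_surjective (ExteriorAlgebra.map f).toLinearMap
    (ExteriorAlgebra.map_surjective_iff.mpr hf)

theorem isArtinianRing_exteriorAlgebra [IsArtinianRing R] [Module.Finite R M] :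
    IsArtinianRing (ExteriorAlgebra R M) :=
  have := finite_exteriorAlgebra (R := R) (M := M)
  isArtinian_of_tower R inferInstance

end ExteriorAlgebra

theorem statement12_general {R V : Type*} [CommRing R] [IsArtinianRing R] [AddCommGroup V]
    [Module R V] [Module.Finite R V] {M N : Type*}
    [AddCommGroup M] [Module (ExteriorAlgebra R V) M]
    [Module.Free (ExteriorAlgebra R V) M] [Module.Finite (ExteriorAlgebra R V) M]
    [AddCommGroup N] [Module (ExteriorAlgebra R V) N] [Module.Free (ExteriorAlgebra R V) N]
    (φ : M →ₗ[ExteriorAlgebra R V] N)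
    (hφ : LinearMap.range φ ≤ exteriorAugmentationIdeal R V • ⊤) :
    (φ = 0 ↔ Module.Free (ExteriorAlgebra R V) (N ⧸ LinearMap.range φ)) ∧
    (φ = 0 ↔ Module.Free (ExteriorAlgebra R V) (LinearMap.ker φ)) :=
  have := isArtinianRing_exteriorAlgebra (R := R) (M := V)
  have hI := isNilpotent_exteriorAugmentationIdeal (R := R) (M := V)
  ⟨eq_zero_iff_free_quotient_range hI hφ,
    eq_zero_iff_free_ker hI (fun _ => mul_eq_zero_of_exteriorAugmentationIdeal_mul_eq_zero) hφ⟩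

/-- Let `φ : Λᵃ → Λᵇ` be a homomorphism of free left `Λ`-modules of finite
rank whose image is contained in `𝔪·Λᵇ`.  Then the following are equivalent: (i) `φ = 0`;
(ii) the cokernel `Λᵇ/φ(Λᵃ)` is a free `Λ`-module; (iii) the kernel of `φ` is a free
`Λ`-module. -/
theorem statement12 (n a b : ℕ)
    (φ : (Fin a → SuperAlg n) →ₗ[SuperAlg n] (Fin b → SuperAlg n))
    (hφ : ∀ (x : Fin a → SuperAlg n) (i : Fin b), φ x i ∈ mIdeal n) :
    (φ = 0 ↔ Module.Free (SuperAlg n) ((Fin b → SuperAlg n) ⧸ LinearMap.range φ)) ∧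
    (φ = 0 ↔ Module.Free (SuperAlg n) (LinearMap.ker φ)) := by
  refine statement12_general φ ?_
  rintro _ ⟨x, rfl⟩
  exact mem_smul_top_of_forall_apply_mem (hφ x)

end
end

section
/- Let A be an even (k|l)-supermatrix over Λ with invertible odd-odd block Y, and fix an even row index i ≤ k. For a row vector u ∈ Λ₀ᵏ × Λ₁ˡ (first k entries even, last l entries odd), let A_{i←u} denote the even supermatrix obtained from A by replacing its i-th row with u (its odd-odd block is still Y). Then the map u ↦ ber(A_{i←u}) is additive, and ber(A_{i←λ·u}) = λ·ber(A_{i←u}) for every λ ∈ Λ₀. Likewise, if the even-even block X of A is invertible and i > k is an odd row index, then for row vectors u ∈ Λ₁ᵏ × Λ₀ˡ the map u ↦ ber*(A_{i←u}) is additive and satisfies ber*(A_{i←λ·u}) = λ·ber*(A_{i←u}) for λ ∈ Λ₀. -/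
noncomputable section

open ExteriorAlgebra

/-- A row vector of even parity: its first `k` entries lie in `Λ₀` and its last `l` entries lie
in `Λ₁`. -/
def EvenRowVec (n k l : ℕ) (u : Fin (k + l) → SuperAlg n) : Prop :=
  (∀ j : Fin k, u (Fin.castAdd l j) ∈ evenPart n) ∧
  (∀ j : Fin l, u (Fin.natAdd k j) ∈ oddPart n)

/-- A row vector of odd parity: its first `k` entries lie in `Λ₁` and its last `l` entries lie
in `Λ₀`. -/
def OddRowVec (n k l : ℕ) (u : Fin (k + l) → SuperAlg n) : Prop :=
  (∀ j : Fin k, u (Fin.castAdd l j) ∈ oddPart n) ∧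
  (∀ j : Fin l, u (Fin.natAdd k j) ∈ evenPart n)

/-!
The Leibniz determinant is multilinear in the rows over any commutative ring acting centrally.
Replacing row `i` of `A` by `u` with `i` even leaves `Y` and `β` alone and replaces row `i` of the
Schur complement `X - α Y⁻¹ β` by `u₀ - u₁ Y⁻¹ β`, where `u = (u₀, u₁)`. This row is linear in `u`,
so `ber` is linear over the centre of `Λ`, which contains `Λ₀`; `ber*` is treated in the same way
with the two parities exchanged.
-/

section UpdateRow

variable {ι κ μ ν R : Type*} [DecidableEq μ]

theorem submatrix_updateRow_of_injective [DecidableEq ι] (A : Matrix μ ν R) {f : ι → μ}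
    (hf : f.Injective) (g : κ → ν) (i : ι) (u : ν → R) :
    (A.updateRow (f i) u).submatrix f g = (A.submatrix f g).updateRow i (u ∘ g) := by
  ext r s
  simp [Matrix.updateRow_apply, hf.eq_iff]

theorem submatrix_updateRow_of_notMem_range (A : Matrix μ ν R) {f : ι → μ} (g : κ → ν)
    {r : μ} (hr : r ∉ Set.range f) (u : ν → R) :
    (A.updateRow r u).submatrix f g = A.submatrix f g := by
  ext i s
  exact congrFun (Matrix.updateRow_ne fun hi => hr ⟨i, hi⟩) (g s)

theorem updateRow_sub_updateRow_mul [Fintype κ] [NonUnitalNonAssocRing R]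
    (X : Matrix μ ν R) (α : Matrix μ κ R) (B : Matrix κ ν R) (i : μ) (x : ν → R) (y : κ → R) :
    X.updateRow i x - α.updateRow i y * B =
      (X - α * B).updateRow i (x - Matrix.vecMul y B) := by
  rw [Matrix.updateRow_mul]
  ext r s
  by_cases hr : r = i <;> simp [Matrix.updateRow_apply, hr]

end UpdateRow

section Determinant

variable (S R : Type*) [CommSemiring S] [Ring R] [Algebra S R]

/-- The determinant `ncdet` as a multilinear function of the rows, over any commutative semiring
`S` of central scalars; the noncommutative analogue of `Matrix.detRowAlternating`. -/
def ncdetRowMultilinear (k : ℕ) :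
    MultilinearMap S (fun _ : Fin k => Fin k → R) R :=
  ∑ σ : Equiv.Perm (Fin k), ((Equiv.Perm.sign σ : ℤˣ) : ℤ) •
    ((MultilinearMap.mkPiAlgebraFin S k R).compLinearMap fun i => LinearMap.proj i).domDomCongr σ

variable {R}

theorem ncdetRowMultilinear_apply {k : ℕ} (M : Matrix (Fin k) (Fin k) R) :
    ncdetRowMultilinear S R k M = ncdet M := by
  unfold ncdetRowMultilinear ncdet
  exact sum_apply _ _ _

theorem isLinearMap_ncdet_updateRow_sub_updateRow_mul {V p : Type*} [AddCommMonoid V] [Module S V]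
    [Fintype p] {k : ℕ} (X : Matrix (Fin k) (Fin k) R) (α : Matrix (Fin k) p R)
    (B : Matrix p (Fin k) R) (i : Fin k) (x : V →ₗ[S] Fin k → R) (y : V →ₗ[S] p → R) :
    IsLinearMap S fun u => ncdet (X.updateRow i (x u) - α.updateRow i (y u) * B) := by
  let schurRow : V →ₗ[S] Fin k → R := x - B.vecMulLinear.restrictScalars S ∘ₗ y
  have ncdet_eq (u : V) : ncdet (X.updateRow i (x u) - α.updateRow i (y u) * B) =
      (ncdetRowMultilinear S R k).toLinearMap (X - α * B) i (schurRow u) := by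
    rw [updateRow_sub_updateRow_mul, ← ncdetRowMultilinear_apply S]
    rfl
  simp only [ncdet_eq]
  exact ((ncdetRowMultilinear S R k).toLinearMap (X - α * B) i ∘ₗ schurRow).isLinear

end Determinant

section EvenCentral

variable {R M : Type*} [CommRing R] [AddCommGroup M] [Module R M] {Q : QuadraticForm R M}

theorem commute_of_mem_evenOdd_zero (hQ : ∀ v w, Q.IsOrtho v w) {x : CliffordAlgebra Q}
    (hx : x ∈ CliffordAlgebra.evenOdd Q 0) (y : CliffordAlgebra Q) : Commute x y := by
  have commute_homogeneous {j : ZMod 2} {z : CliffordAlgebra Q}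
      (hz : z ∈ CliffordAlgebra.evenOdd Q j) : Commute x z := by
    simpa using CliffordAlgebra.commute_map_mul_map_of_isOrtho_of_mem_evenOdd_zero_left
      (.id Q) (.id Q) hQ x z hx hz
  obtain ⟨y₀, hy₀, y₁, hy₁, rfl⟩ := Submodule.mem_sup.1
    ((CliffordAlgebra.evenOdd_isCompl Q).sup_eq_top ▸ Submodule.mem_top (x := y))
  exact (commute_homogeneous hy₀).add_right (commute_homogeneous hy₁)

theorem mem_center_of_mem_evenPart {n : ℕ} {x : SuperAlg n} (hx : x ∈ evenPart n) :
    x ∈ Subring.center (SuperAlg n) :=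
  Subring.mem_center_iff.2 fun y =>
    (commute_of_mem_evenOdd_zero (fun _ _ => by simp [QuadraticMap.isOrtho_def]) hx y).symm

end EvenCentral

section Berezinian

variable {n k l : ℕ} (A : Matrix (Fin (k + l)) (Fin (k + l)) (SuperAlg n))

theorem castAdd_notMem_range_natAdd (i : Fin k) :
    Fin.castAdd l i ∉ Set.range (Fin.natAdd k : Fin l → Fin (k + l)) := by
  rintro ⟨j, hj⟩
  have hval : k + (j : ℕ) = i := congrArg Fin.val hj
  lia

theorem natAdd_notMem_range_castAdd (i : Fin l) :
    Fin.natAdd k i ∉ Set.range (Fin.castAdd l : Fin k → Fin (k + l)) := by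
  rintro ⟨j, hj⟩
  exact castAdd_notMem_range_natAdd j ⟨i, hj.symm⟩

theorem ber_updateRow_castAdd (i : Fin k) (u : Fin (k + l) → SuperAlg n) :
    ber n k l (A.updateRow (Fin.castAdd l i) u) =
      ncdet ((Xblk n k l A).updateRow i (u ∘ Fin.castAdd l) -
          (alphaBlk n k l A).updateRow i (u ∘ Fin.natAdd k) *
            (Ring.inverse (Yblk n k l A) * betaBlk n k l A)) *
        Ring.inverse (ncdet (Yblk n k l A)) := by
  have hX : Xblk n k l (A.updateRow (Fin.castAdd l i) u) =
      (Xblk n k l A).updateRow i (u ∘ Fin.castAdd l) :=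
    submatrix_updateRow_of_injective A (Fin.castAdd_injective k l) (Fin.castAdd l) i u
  have hα : alphaBlk n k l (A.updateRow (Fin.castAdd l i) u) =
      (alphaBlk n k l A).updateRow i (u ∘ Fin.natAdd k) :=
    submatrix_updateRow_of_injective A (Fin.castAdd_injective k l) (Fin.natAdd k) i u
  have hβ : betaBlk n k l (A.updateRow (Fin.castAdd l i) u) = betaBlk n k l A :=
    submatrix_updateRow_of_notMem_range A (Fin.castAdd l) (castAdd_notMem_range_natAdd i) u
  have hY : Yblk n k l (A.updateRow (Fin.castAdd l i) u) = Yblk n k l A :=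
    submatrix_updateRow_of_notMem_range A (Fin.natAdd k) (castAdd_notMem_range_natAdd i) u
  rw [ber, hX, hα, hβ, hY, Matrix.mul_assoc]

theorem berStar_updateRow_natAdd (i : Fin l) (u : Fin (k + l) → SuperAlg n) :
    berStar n k l (A.updateRow (Fin.natAdd k i) u) =
      Ring.inverse (ncdet (Xblk n k l A)) *
        ncdet ((Yblk n k l A).updateRow i (u ∘ Fin.natAdd k) -
          (betaBlk n k l A).updateRow i (u ∘ Fin.castAdd l) *
            (Ring.inverse (Xblk n k l A) * alphaBlk n k l A)) := by
  have hX : Xblk n k l (A.updateRow (Fin.natAdd k i) u) = Xblk n k l A :=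
    submatrix_updateRow_of_notMem_range A (Fin.castAdd l) (natAdd_notMem_range_castAdd i) u
  have hα : alphaBlk n k l (A.updateRow (Fin.natAdd k i) u) = alphaBlk n k l A :=
    submatrix_updateRow_of_notMem_range A (Fin.natAdd k) (natAdd_notMem_range_castAdd i) u
  have hβ : betaBlk n k l (A.updateRow (Fin.natAdd k i) u) =
      (betaBlk n k l A).updateRow i (u ∘ Fin.castAdd l) :=
    submatrix_updateRow_of_injective A (Fin.natAdd_injective l k) (Fin.castAdd l) i u
  have hY : Yblk n k l (A.updateRow (Fin.natAdd k i) u) =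
      (Yblk n k l A).updateRow i (u ∘ Fin.natAdd k) :=
    submatrix_updateRow_of_injective A (Fin.natAdd_injective l k) (Fin.natAdd k) i u
  rw [berStar, hX, hα, hβ, hY, Matrix.mul_assoc]

variable (S : Type*) [CommSemiring S] [Algebra S (SuperAlg n)]

theorem isLinearMap_ber_updateRow_castAdd (i : Fin k) :
    IsLinearMap S fun u => ber n k l (A.updateRow (Fin.castAdd l i) u) := by
  have det_linear := isLinearMap_ncdet_updateRow_sub_updateRow_mul S (Xblk n k l A)
    (alphaBlk n k l A) (Ring.inverse (Yblk n k l A) * betaBlk n k l A) i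
    (LinearMap.funLeft S (SuperAlg n) (Fin.castAdd l))
    (LinearMap.funLeft S (SuperAlg n) (Fin.natAdd k))
  simp only [ber_updateRow_castAdd]
  exact (LinearMap.mulRight S (Ring.inverse (ncdet (Yblk n k l A))) ∘ₗ det_linear.mk').isLinear

theorem isLinearMap_berStar_updateRow_natAdd (i : Fin l) :
    IsLinearMap S fun u => berStar n k l (A.updateRow (Fin.natAdd k i) u) := by
  have det_linear := isLinearMap_ncdet_updateRow_sub_updateRow_mul S (Yblk n k l A)
    (betaBlk n k l A) (Ring.inverse (Xblk n k l A) * alphaBlk n k l A) i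
    (LinearMap.funLeft S (SuperAlg n) (Fin.natAdd k))
    (LinearMap.funLeft S (SuperAlg n) (Fin.castAdd l))
  simp only [berStar_updateRow_natAdd]
  exact (LinearMap.mulLeft S (Ring.inverse (ncdet (Xblk n k l A))) ∘ₗ det_linear.mk').isLinear

end Berezinian

theorem statement13_general (n k l : ℕ) (A : Matrix (Fin (k + l)) (Fin (k + l)) (SuperAlg n)) :
    (IsUnit (Yblk n k l A) → ∀ i : Fin k,
      IsLinearMap (Subring.center (SuperAlg n))
        fun u => ber n k l (A.updateRow (Fin.castAdd l i) u)) ∧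
    (IsUnit (Xblk n k l A) → ∀ i : Fin l,
      IsLinearMap (Subring.center (SuperAlg n))
        fun u => berStar n k l (A.updateRow (Fin.natAdd k i) u)) :=
  ⟨fun _ => isLinearMap_ber_updateRow_castAdd A _,
    fun _ => isLinearMap_berStar_updateRow_natAdd A _⟩

/-- Let `A` be an even `(k|l)`-supermatrix over `Λ`.  If the odd-odd block
`Y` is invertible and `i` is an even row index, then `u ↦ ber(A_{i←u})`, on row vectors `u`
with first `k` entries even and last `l` entries odd, is additive and `Λ₀`-homogeneous.
Likewise, if the even-even block `X` is invertible and `i` is an odd row index, then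
`u ↦ ber*(A_{i←u})`, on row vectors `u` with first `k` entries odd and last `l` entries even,
is additive and `Λ₀`-homogeneous. -/
theorem statement13 (n k l : ℕ) (A : Matrix (Fin (k + l)) (Fin (k + l)) (SuperAlg n))
    (hA : IsEvenSupermatrix n k l A) :
    (IsUnit (Yblk n k l A) →
      ∀ i : Fin k,
        (∀ u v : Fin (k + l) → SuperAlg n, EvenRowVec n k l u → EvenRowVec n k l v →
          ber n k l (A.updateRow (Fin.castAdd l i) (u + v)) =
            ber n k l (A.updateRow (Fin.castAdd l i) u) +
              ber n k l (A.updateRow (Fin.castAdd l i) v)) ∧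
        (∀ (u : Fin (k + l) → SuperAlg n) (lam : SuperAlg n), EvenRowVec n k l u →
          lam ∈ evenPart n →
          ber n k l (A.updateRow (Fin.castAdd l i) fun j => lam * u j) =
            lam * ber n k l (A.updateRow (Fin.castAdd l i) u))) ∧
    (IsUnit (Xblk n k l A) →
      ∀ i : Fin l,
        (∀ u v : Fin (k + l) → SuperAlg n, OddRowVec n k l u → OddRowVec n k l v →
          berStar n k l (A.updateRow (Fin.natAdd k i) (u + v)) =
            berStar n k l (A.updateRow (Fin.natAdd k i) u) +
              berStar n k l (A.updateRow (Fin.natAdd k i) v)) ∧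
        (∀ (u : Fin (k + l) → SuperAlg n) (lam : SuperAlg n), OddRowVec n k l u →
          lam ∈ evenPart n →
          berStar n k l (A.updateRow (Fin.natAdd k i) fun j => lam * u j) =
            lam * berStar n k l (A.updateRow (Fin.natAdd k i) u))) := by
  obtain ⟨ber_linear, berStar_linear⟩ := statement13_general n k l A
  exact ⟨fun hY i => ⟨fun u v _ _ => (ber_linear hY i).map_add u v,
      fun u lam _ hlam => (ber_linear hY i).map_smul ⟨lam, mem_center_of_mem_evenPart hlam⟩ u⟩,
    fun hX i => ⟨fun u v _ _ => (berStar_linear hX i).map_add u v,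
      fun u lam _ hlam => (berStar_linear hX i).map_smul ⟨lam, mem_center_of_mem_evenPart hlam⟩ u⟩⟩

end
end

section
/- If H : ℂᵍ → A is a super theta function for (Z_e, Z_o), then for each α ∈ {1,…,g−1} the function H_α := η_α·H + (1/(2πi))·Σ_{k=1}^{g} Z_{kα}·(∂H/∂z_k) is again a super theta function for (Z_e, Z_o); that is, H_α satisfies H_α(z + e_j) = H_α(z) for every standard basis vector e_j, and φ_i(H_α)(z + Z_i) = exp(−πi(2z_i + Z_{ii}))·H_α(z) for every i = 1,…,g and z ∈ ℂᵍ. -/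
noncomputable section

open ExteriorAlgebra

set_option synthInstance.maxHeartbeats 1000000 in
theorem superAlg_noZeroSMulDivisors (n : ℕ) : NoZeroSMulDivisors ℂ (SuperAlg n) :=
  inferInstance

theorem superAlg_exteriorPower_eq_bot (n i : ℕ) (hi : n < i) :
    (⋀[ℂ]^i (Fin n → ℂ) : Submodule ℂ (SuperAlg n)) = ⊥ := by
  rw [← ExteriorAlgebra.ιMulti_span_fixedDegree]
  refine le_bot_iff.mp (Submodule.span_le.mpr ?_)
  rintro x ⟨v, rfl⟩
  have hv : ¬ LinearIndependent ℂ v := by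
    intro h
    have hc := h.fintype_card_le_finrank
    simp only [Fintype.card_fin, Module.finrank_fin_fun] at hc
    omega
  haveI := superAlg_noZeroSMulDivisors n
  simpa using AlternatingMap.map_linearDependent (ιMulti ℂ i) v hv

/-- `Λ` is a finite-dimensional complex vector space (of dimension `2ⁿ`). -/
instance superAlg_moduleFinite (n : ℕ) : Module.Finite ℂ (SuperAlg n) := by
  classical
  rw [Module.finite_def]
  have hfg : ∀ i : ℕ, (⋀[ℂ]^i (Fin n → ℂ) : Submodule ℂ (SuperAlg n)).FG := by
    intro i
    refine Submodule.FG.pow ?_ i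
    rw [LinearMap.range_eq_map]
    exact Submodule.FG.map _ (Module.finite_def.mp inferInstance)
  have hint : DirectSum.IsInternal
      (fun i : ℕ => (⋀[ℂ]^i (Fin n → ℂ) : Submodule ℂ (SuperAlg n))) :=
    DirectSum.Decomposition.isInternal _
  have htop := hint.submodule_iSup_eq_top
  have hsup : (⊤ : Submodule ℂ (SuperAlg n))
      = ⨆ i ∈ Finset.range (n + 1), (⋀[ℂ]^i (Fin n → ℂ) : Submodule ℂ (SuperAlg n)) := by
    refine le_antisymm ?_ le_top
    rw [← htop]
    refine iSup_le fun i => ?_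
    rcases le_or_gt i n with hi | hi
    · exact le_biSup _ (Finset.mem_range.mpr (by omega))
    · rw [superAlg_exteriorPower_eq_bot n i hi]
      exact bot_le
  rw [hsup]
  exact Submodule.fg_biSup _ _ fun i _ => hfg i

/-- A norm on the finite-dimensional complex vector space `Λ`, transported from `ℂ^{2ⁿ}` by a
choice of basis.  (All norms on a finite-dimensional complex vector space are equivalent, so
the notions of holomorphy and derivative below do not depend on this choice; holomorphy is
equivalent to componentwise complex analyticity with respect to any basis.) -/
instance superAlg_normedAddCommGroup (n : ℕ) : NormedAddCommGroup (SuperAlg n) :=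
  NormedAddCommGroup.induced (SuperAlg n)
    (Fin (Module.finrank ℂ (SuperAlg n)) → ℂ)
    (Module.finBasis ℂ (SuperAlg n)).equivFun
    (Module.finBasis ℂ (SuperAlg n)).equivFun.injective

instance superAlg_normedSpace (n : ℕ) : NormedSpace ℂ (SuperAlg n) :=
  NormedSpace.induced ℂ (SuperAlg n) (Fin (Module.finrank ℂ (SuperAlg n)) → ℂ)
    (Module.finBasis ℂ (SuperAlg n)).equivFun

/-- The reduction `λ ↦ λ^red`: the image of `λ ∈ Λ` under the augmentation `Λ → ℂ`
(quotienting out nilpotents). -/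
def reduce (n : ℕ) (a : SuperAlg n) : ℂ :=
  ExteriorAlgebra.algebraMapInv (R := ℂ) (M := Fin n → ℂ) a

/-- The `k`-th odd generator of the exterior algebra `Λ N = ⋀ ℂ^N`. -/
def gen16 (N : ℕ) (k : Fin N) : SuperAlg N :=
  ExteriorAlgebra.ι ℂ (Pi.single k (1 : ℂ))

/-- In `A = ⋀ ℂ^{n+g'}` (the exterior algebra `Λ` with the extra odd generators
`η₁, …, η_{g'}` adjoined), the generator `η_α` is the `(n+α)`-th generator. -/
def eta (n g' : ℕ) (α : Fin g') : SuperAlg (n + g') :=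
  gen16 (n + g') (Fin.natAdd n α)

/-- The copy of `Λ` inside `A = ⋀ ℂ^{n+g'}`: the subalgebra generated by the first `n` odd
generators `β₁, …, βₙ`. -/
def lambdaSub (n g' : ℕ) : Subalgebra ℂ (SuperAlg (n + g')) :=
  Algebra.adjoin ℂ (Set.range fun k : Fin n => gen16 (n + g') (Fin.castAdd g' k))

/-- The nilpotent part `λ − λ^red` of an element of the exterior algebra. -/
def nilpPart (N : ℕ) (a : SuperAlg N) : SuperAlg N :=
  a - algebraMap ℂ (SuperAlg N) (reduce N a)

/-- The partial derivative `∂H/∂z_k` of a function `H : ℂᵍ → A`. -/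
def pDeriv (N g : ℕ) (k : Fin g) (H : (Fin g → ℂ) → SuperAlg N) :
    (Fin g → ℂ) → SuperAlg N :=
  fun z => deriv (fun t => H (Function.update z k t)) (z k)

/-- The iterated partial derivative `∂^m H` for a multi-index `m`. -/
def mDeriv (N g : ℕ) (m : Fin g → ℕ) (H : (Fin g → ℂ) → SuperAlg N) :
    (Fin g → ℂ) → SuperAlg N :=
  (List.finRange g).foldr (fun k F => (pDeriv N g k)^[m k] F) H

/-- The Taylor-shifted value `H(z + w)` for an even shift vector `w` with reduced parts `r_i`
and nilpotent parts `ν_i`: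
`H(z + w) := Σ_m (1/m!)·(∂^m H)(z + r)·ν^m`, summing over multi-indices `m`.  Since each
`ν_i` lies in the nilpotent ideal `𝔪` of `A = ⋀ ℂ^N` and `𝔪^{N+1} = 0`, all terms with some
`m_i > N` vanish, so the sum may be truncated to the finite box `m_i ≤ N`. -/
def shiftEval (N g : ℕ) (H : (Fin g → ℂ) → SuperAlg N) (w : Fin g → SuperAlg N)
    (z : Fin g → ℂ) : SuperAlg N :=
  ∑ m ∈ Fintype.piFinset (fun _ : Fin g => Finset.range (N + 1)),
    (((∏ i, (m i).factorial : ℕ) : ℂ))⁻¹ •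
      (mDeriv N g m H (fun i => z i + reduce N (w i)) *
        ((List.finRange g).map fun i => nilpPart N (w i) ^ m i).prod)

/-- The (finite) exponential series of a nilpotent element of `A`. -/
def nexp (N : ℕ) (a : SuperAlg N) : SuperAlg N :=
  ∑ m ∈ Finset.range (N + 1), ((m.factorial : ℂ))⁻¹ • a ^ m

/-- The multiplier `exp(−πi(2z_i + Z_{ii})) = e^{−2πi z_i}·e^{−πi r_{ii}}·exp(−πi ν_{ii})`,
where `r_{ii}` and `ν_{ii}` are the reduced and nilpotent parts of `Z_{ii}` and the last
factor is the finite exponential series of the nilpotent element `−πi·ν_{ii}`. -/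
def expFactor (N g : ℕ) (Ze : Matrix (Fin g) (Fin g) (SuperAlg N)) (i : Fin g)
    (z : Fin g → ℂ) : SuperAlg N :=
  Complex.exp (-(Real.pi : ℂ) * Complex.I * (2 * z i + reduce N (Ze i i))) •
    nexp N (algebraMap ℂ (SuperAlg N) (-(Real.pi : ℂ) * Complex.I) * nilpPart N (Ze i i))

/-- `H : ℂᵍ → A` is a super theta function for `(Z_e, Z_o)` (the dependence on `Z_o` being
through the algebra endomorphisms `φ_i`, which fix `Λ` and send `η_α ↦ η_α + Z_{iα}`):
`H` is holomorphic, `H(z + e_j) = H(z)` for every standard basis vector `e_j`, and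
`φ_i(H)(z + Z_i) = exp(−πi(2z_i + Z_{ii}))·H(z)` for every `i`. -/
def IsSuperTheta (N g : ℕ) (φ : Fin g → (SuperAlg N →ₐ[ℂ] SuperAlg N))
    (Ze : Matrix (Fin g) (Fin g) (SuperAlg N)) (H : (Fin g → ℂ) → SuperAlg N) : Prop :=
  Differentiable ℂ H ∧
  (∀ (j : Fin g) (z : Fin g → ℂ), H (z + Pi.single j 1) = H z) ∧
  (∀ (i : Fin g) (z : Fin g → ℂ),
    shiftEval N g (fun w => φ i (H w)) (fun k => Ze i k) z = expFactor N g Ze i z * H z)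

/-!
Put `D_η = η + (1/2πi) ∑ₖ ζₖ ∂ₖ` with `ζₖ = Z_{kα}`, so that `H_α = D_η H` for `η = η_α`, and let
`eᵢ` be the multiplier `exp(−πi(2zᵢ + Zᵢᵢ))`. Translations and Taylor shifts commute with `D_η`,
and `φᵢ ∘ D_η = D_{η + ζᵢ} ∘ φᵢ` because `φᵢ` fixes every `ζₖ` and sends `η` to `η + ζᵢ`. Hence
`φᵢ(D_η H)(z + Zᵢ) = D_{η + ζᵢ}(eᵢ H)(z)`. Since `eᵢ` is central and `∂ₖ eᵢ = −2πi δᵢₖ eᵢ`, the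
derivative of the multiplier contributes `−ζᵢ eᵢ H`, which cancels the extra `ζᵢ` and leaves
`eᵢ D_η H`.

That shifts commute with `D_η` rests on the partial derivatives of a holomorphic function being
holomorphic and commuting, which follows from Cauchy's formula on complex lines.
-/

section Analysis

open Metric Set
open scoped Real

theorem differentiable_intervalIntegral_of_continuous_fderiv {𝕜 E F : Type*} [RCLike 𝕜]
    [NormedAddCommGroup E] [NormedSpace 𝕜 E] [ProperSpace E]
    [NormedAddCommGroup F] [NormedSpace ℝ F] [NormedSpace 𝕜 F]
    {f : E → ℝ → F} {f' : E → ℝ → E →L[𝕜] F}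
    (hf : ∀ x, Continuous (f x)) (hf' : Continuous (Function.uncurry f'))
    (hderiv : ∀ x t, HasFDerivAt (f · t) (f' x t) x) (a b : ℝ) :
    Differentiable 𝕜 fun x => ∫ t in a..b, f x t := by
  intro x₀
  obtain ⟨C, hC⟩ := ((isCompact_closedBall x₀ 1).prod
    (isCompact_uIcc (a := a) (b := b))).exists_bound_of_continuousOn hf'.continuousOn
  refine (intervalIntegral.hasFDerivAt_integral_of_dominated_of_fderiv_le (bound := fun _ => C)
    (F' := f') (closedBall_mem_nhds x₀ one_pos) ?_ ?_ ?_ ?_ ?_ ?_).differentiableAt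
  · exact .of_forall fun x => (hf x).aestronglyMeasurable
  · exact (hf x₀).intervalIntegrable a b
  · exact (hf'.uncurry_left x₀).aestronglyMeasurable
  · exact .of_forall fun t ht x hx => hC (x, t) ⟨hx, uIoc_subset_uIcc ht⟩
  · exact intervalIntegrable_const
  · exact .of_forall fun t _ x _ => hderiv x t

variable {E F : Type*} [NormedAddCommGroup E] [NormedSpace ℂ E]
  [NormedAddCommGroup F] [NormedSpace ℂ F]

-- The Schwarz lemma bounds the derivative at `z₀` of the increment `y ↦ f (y + (z - z₀)) - f y`,
-- which is uniformly small on the unit ball around `z₀`.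
theorem continuous_fderiv_of_differentiable [ProperSpace E] {f : E → F}
    (hf : Differentiable ℂ f) : Continuous (fderiv ℂ f) := by
  refine continuous_iff_continuousAt.mpr fun z₀ => Metric.continuousAt_iff.mpr fun ε hε => ?_
  obtain ⟨δ, hδ, hunif⟩ := Metric.uniformContinuousOn_iff.mp
    ((isCompact_closedBall z₀ 2).uniformContinuousOn_of_continuous hf.continuous.continuousOn)
    (ε / 4) (by positivity)
  refine ⟨min δ 1, by positivity, fun z hz => ?_⟩
  set increment : E → F := fun y => f (y + (z - z₀)) - f y
  have hincrement : Differentiable ℂ increment := by fun_prop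
  have hsmall : ∀ y ∈ ball z₀ 1, ‖increment y‖ ≤ ε / 4 := by
    intro y hy
    have hshift : dist (y + (z - z₀)) y < min δ 1 := by simpa [dist_eq_norm] using hz
    rw [← dist_eq_norm]
    have hy2 : y + (z - z₀) ∈ closedBall z₀ 2 := by
      rw [mem_closedBall]
      rw [mem_ball] at hy
      linarith [dist_triangle (y + (z - z₀)) y z₀, min_le_right δ 1]
    exact (hunif _ hy2 _ (ball_subset_closedBall.trans (closedBall_subset_closedBall one_le_two) hy)
      (hshift.trans_le (min_le_left δ 1))).le
  have hmaps : MapsTo increment (ball z₀ 1) (closedBall (increment z₀) (ε / 2)) := by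
    intro y hy
    rw [mem_closedBall, dist_eq_norm]
    linarith [norm_sub_le (increment y) (increment z₀), hsmall y hy,
      hsmall z₀ (mem_ball_self one_pos)]
  have hfderiv : fderiv ℂ increment z₀ = fderiv ℂ f z - fderiv ℂ f z₀ := by
    rw [fderiv_fun_sub (by fun_prop) (hf z₀), fderiv_comp_add_right, add_sub_cancel]
  calc dist (fderiv ℂ f z) (fderiv ℂ f z₀)
      = ‖fderiv ℂ increment z₀‖ := by rw [dist_eq_norm, hfderiv]
    _ ≤ ε / 2 / 1 :=
      Complex.norm_fderiv_le_div_of_mapsTo_ball hincrement.differentiableOn hmaps one_pos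
    _ < ε := by linarith

theorem fderiv_apply_eq_circleIntegral [CompleteSpace F] {f : E → F} (hf : Differentiable ℂ f)
    (z v : E) : fderiv ℂ f z v =
      (2 * π * Complex.I : ℂ)⁻¹ • ∮ t in C(0, 1), (1 / t ^ 2) • f (z + t • v) := by
  have hline : Differentiable ℂ fun t : ℂ => f (z + t • v) := by fun_prop
  have hcauchy := hline.differentiableOn.deriv_eq_smul_circleIntegral (c := 0) one_pos
  simp only [sub_zero] at hcauchy
  rw [hcauchy, inv_smul_smul₀ Complex.two_pi_I_ne_zero]
  exact (hf z).lineDeriv_eq_fderiv.symm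

theorem differentiable_fderiv_apply [ProperSpace E] [CompleteSpace F] {f : E → F}
    (hf : Differentiable ℂ f) (v : E) : Differentiable ℂ fun z => fderiv ℂ f z v := by
  simp only [fderiv_apply_eq_circleIntegral hf _ v, circleIntegral, deriv_circleMap]
  have hfderiv := continuous_fderiv_of_differentiable hf
  refine (differentiable_intervalIntegral_of_continuous_fderiv
    (f' := fun z t => (circleMap 0 1 t * Complex.I) • (1 / circleMap 0 1 t ^ 2) •
      fderiv ℂ f (z + circleMap 0 1 t • v)) ?_ ?_ ?_ _ _).const_smul _
  · intro z
    have := hf.continuous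
    fun_prop (disch := simp)
  · fun_prop (disch := simp)
  · exact fun z t =>
      (((hasFDerivAt_comp_add_right _).mpr (hf _).hasFDerivAt).const_smul _).const_smul _

theorem contDiff_of_differentiable [FiniteDimensional ℂ E] [CompleteSpace F] {f : E → F}
    (hf : Differentiable ℂ f) (n : ℕ) : ContDiff ℂ n f := by
  have : ProperSpace E := FiniteDimensional.proper ℂ E
  induction n generalizing f with
  | zero => exact contDiff_zero.mpr hf.continuous
  | succ n ih =>
    exact contDiff_succ_iff_fderiv_apply.mpr
      ⟨hf, by simp, fun v => ih (differentiable_fderiv_apply hf v)⟩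

theorem fderiv_fderiv_apply_comm [FiniteDimensional ℂ E] [CompleteSpace F] {f : E → F}
    (hf : Differentiable ℂ f) (z v w : E) :
    fderiv ℂ (fun x => fderiv ℂ f x v) z w = fderiv ℂ (fun x => fderiv ℂ f x w) z v := by
  have hsmooth : ContDiff ℂ 2 f := contDiff_of_differentiable hf 2
  have hf' : DifferentiableAt ℂ (fderiv ℂ f) z :=
    (hsmooth.fderiv_right (m := 1) (by norm_num)).differentiable one_ne_zero z
  have hsymm : IsSymmSndFDerivAt ℂ f z := hsmooth.contDiffAt.isSymmSndFDerivAt (by simp)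
  have happly (u u' : E) : fderiv ℂ (fun x => fderiv ℂ f x u) z u' =
      fderiv ℂ (fderiv ℂ f) z u' u := by
    rw [fderiv_clm_apply hf' (by fun_prop)]
    simp
  rw [happly, happly, hsymm]

end Analysis

section EvenPart

variable {N : ℕ}

theorem commute_of_mem_evenPart {a : SuperAlg N} (ha : a ∈ evenPart N) (b : SuperAlg N) :
    Commute a b := by
  have hhomogeneous (p : ZMod 2) (x : SuperAlg N)
      (hx : x ∈ CliffordAlgebra.evenOdd (0 : QuadraticForm ℂ (Fin N → ℂ)) p) : Commute a x := by
    simpa using CliffordAlgebra.commute_map_mul_map_of_isOrtho_of_mem_evenOdd_zero_left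
      (QuadraticMap.Isometry.id _) (QuadraticMap.Isometry.id _)
      (fun _ _ => by simp [QuadraticMap.IsOrtho]) _ _ ha hx
  obtain ⟨even, heven, odd, hodd, rfl⟩ := Submodule.mem_sup.mp
    ((CliffordAlgebra.evenOdd_isCompl (0 : QuadraticForm ℂ (Fin N → ℂ))).sup_eq_top.ge
      (Submodule.mem_top (x := b)))
  exact (hhomogeneous 0 even heven).add_right (hhomogeneous 1 odd hodd)

theorem commute_expFactor {g : ℕ} {Ze : Matrix (Fin g) (Fin g) (SuperAlg N)} {i : Fin g}
    (hZe : Ze i i ∈ evenPart N) (z : Fin g → ℂ) (b : SuperAlg N) :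
    Commute (expFactor N g Ze i z) b := by
  have hnilp : Commute (nilpPart N (Ze i i)) b :=
    (commute_of_mem_evenPart hZe b).sub_left (Algebra.commutes _ b)
  refine Commute.smul_left (Commute.sum_left _ _ _ fun m _ => ?_) _
  exact ((Commute.mul_left (Algebra.commutes _ b) hnilp).pow_left m).smul_left _

end EvenPart

section PartialDerivatives

variable {N g : ℕ} {F : (Fin g → ℂ) → SuperAlg N}

theorem differentiable_linearMap_comp {M : ℕ} (L : SuperAlg N →ₗ[ℂ] SuperAlg M)
    (hF : Differentiable ℂ F) : Differentiable ℂ fun z => L (F z) :=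
  L.toContinuousLinearMap.differentiable.comp hF

theorem hasDerivAt_linearMap_comp {M : ℕ} (L : SuperAlg N →ₗ[ℂ] SuperAlg M)
    {f : ℂ → SuperAlg N} {f' : SuperAlg N} {t : ℂ} (hf : HasDerivAt f f' t) :
    HasDerivAt (fun s => L (f s)) (L f') t :=
  L.toContinuousLinearMap.hasFDerivAt.comp_hasDerivAt t hf

theorem hasDerivAt_comp_update (hF : Differentiable ℂ F) (k : Fin g) (z : Fin g → ℂ) :
    HasDerivAt (fun t => F (Function.update z k t)) (fderiv ℂ F z (Pi.single k 1)) (z k) := by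
  have hchain := (hF _).hasFDerivAt.comp_hasDerivAt (z k) (hasDerivAt_update z k (z k))
  rwa [Function.update_eq_self] at hchain

theorem pDeriv_eq_fderiv (hF : Differentiable ℂ F) (k : Fin g) :
    pDeriv N g k F = fun z => fderiv ℂ F z (Pi.single k 1) :=
  funext fun z => (hasDerivAt_comp_update hF k z).deriv

theorem hasDerivAt_pDeriv (hF : Differentiable ℂ F) (k : Fin g) (z : Fin g → ℂ) :
    HasDerivAt (fun t => F (Function.update z k t)) (pDeriv N g k F z) (z k) :=
  (hasDerivAt_comp_update hF k z).differentiableAt.hasDerivAt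

theorem differentiable_pDeriv (hF : Differentiable ℂ F) (k : Fin g) :
    Differentiable ℂ (pDeriv N g k F) := by
  have : CompleteSpace (SuperAlg N) := FiniteDimensional.complete ℂ _
  rw [pDeriv_eq_fderiv hF]
  exact differentiable_fderiv_apply hF _

theorem pDeriv_comm (hF : Differentiable ℂ F) (k l : Fin g) :
    pDeriv N g k (pDeriv N g l F) = pDeriv N g l (pDeriv N g k F) := by
  have : CompleteSpace (SuperAlg N) := FiniteDimensional.complete ℂ _
  rw [pDeriv_eq_fderiv (differentiable_pDeriv hF l), pDeriv_eq_fderiv (differentiable_pDeriv hF k),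
    pDeriv_eq_fderiv hF, pDeriv_eq_fderiv hF]
  exact funext fun z => fderiv_fderiv_apply_comm hF z _ _

theorem pDeriv_linearMap_comp {M : ℕ} (L : SuperAlg N →ₗ[ℂ] SuperAlg M)
    (hF : Differentiable ℂ F) (k : Fin g) :
    pDeriv M g k (fun z => L (F z)) = fun z => L (pDeriv N g k F z) :=
  funext fun z => (hasDerivAt_linearMap_comp L (hasDerivAt_pDeriv hF k z)).deriv

theorem pDeriv_sum {ι : Type*} {s : Finset ι} {f : ι → (Fin g → ℂ) → SuperAlg N}
    (hf : ∀ i ∈ s, Differentiable ℂ (f i)) (k : Fin g) :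
    pDeriv N g k (fun z => ∑ i ∈ s, f i z) = fun z => ∑ i ∈ s, pDeriv N g k (f i) z :=
  funext fun z => (HasDerivAt.fun_sum fun i hi => hasDerivAt_pDeriv (hf i hi) k z).deriv

theorem pDeriv_comp_add_right (hF : Differentiable ℂ F) (k : Fin g) (r : Fin g → ℂ) :
    pDeriv N g k (fun z => F (z + r)) = fun z => pDeriv N g k F (z + r) := by
  rw [pDeriv_eq_fderiv (by fun_prop), pDeriv_eq_fderiv hF]
  simp only [fderiv_comp_add_right]

theorem mDeriv_induction₂ {P : ((Fin g → ℂ) → SuperAlg N) → ((Fin g → ℂ) → SuperAlg N) → Prop}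
    (hP : ∀ F G k, P F G → P (pDeriv N g k F) (pDeriv N g k G)) {F G : (Fin g → ℂ) → SuperAlg N}
    (hFG : P F G) (m : Fin g → ℕ) : P (mDeriv N g m F) (mDeriv N g m G) := by
  unfold mDeriv
  induction List.finRange g with
  | nil => exact hFG
  | cons k l ih =>
    simp only [List.foldr_cons]
    induction m k with
    | zero => exact ih
    | succ p ihp =>
      rw [Function.iterate_succ_apply', Function.iterate_succ_apply']
      exact hP _ _ k ihp

theorem differentiable_mDeriv (hF : Differentiable ℂ F) (m : Fin g → ℕ) :
    Differentiable ℂ (mDeriv N g m F) :=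
  mDeriv_induction₂ (P := fun F _ => Differentiable ℂ F) (fun _ _ k h => differentiable_pDeriv h k)
    (G := F) hF m

theorem mDeriv_comm_of_pDeriv_comm {T : ((Fin g → ℂ) → SuperAlg N) → (Fin g → ℂ) → SuperAlg N}
    (hT : ∀ F, Differentiable ℂ F → ∀ k, pDeriv N g k (T F) = T (pDeriv N g k F))
    (hF : Differentiable ℂ F) (m : Fin g → ℕ) : mDeriv N g m (T F) = T (mDeriv N g m F) :=
  (mDeriv_induction₂ (P := fun F G => Differentiable ℂ F ∧ G = T F)
    (fun F _ k ⟨hF, hG⟩ => ⟨differentiable_pDeriv hF k, by rw [hG, hT F hF]⟩) ⟨hF, rfl⟩ m).2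

theorem pDeriv_shiftEval (hF : Differentiable ℂ F) (k : Fin g) (w : Fin g → SuperAlg N) :
    pDeriv N g k (shiftEval N g F w) = shiftEval N g (pDeriv N g k F) w := by
  let r : Fin g → ℂ := fun i => reduce N (w i)
  let L (m : Fin g → ℕ) : SuperAlg N →ₗ[ℂ] SuperAlg N := ((∏ i, (m i).factorial : ℕ) : ℂ)⁻¹ •
    LinearMap.mulRight ℂ ((List.finRange g).map fun i => nilpPart N (w i) ^ m i).prod
  have hdiff (m : Fin g → ℕ) : Differentiable ℂ fun z => mDeriv N g m F (z + r) :=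
    (differentiable_mDeriv hF m).comp (by fun_prop)
  funext z
  calc pDeriv N g k (shiftEval N g F w) z
      = ∑ m ∈ Fintype.piFinset fun _ => Finset.range (N + 1),
          pDeriv N g k (fun z => L m (mDeriv N g m F (z + r))) z :=
        congrFun (pDeriv_sum (fun m _ => differentiable_linearMap_comp (L m) (hdiff m)) k) z
    _ = ∑ m ∈ Fintype.piFinset fun _ => Finset.range (N + 1),
          L m (mDeriv N g m (pDeriv N g k F) (z + r)) := by
        refine Finset.sum_congr rfl fun m _ => ?_
        rw [pDeriv_linearMap_comp (L m) (hdiff m),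
          pDeriv_comp_add_right (differentiable_mDeriv hF m),
          mDeriv_comm_of_pDeriv_comm (fun F hF l => pDeriv_comm hF l k) hF]
    _ = shiftEval N g (pDeriv N g k F) w z := rfl

end PartialDerivatives

section ThetaOperator

variable {N g : ℕ}

/-- The first order operator `η + (1/2πi) ∑ₖ ζₖ ∂/∂zₖ`, acting from the left on functions
`ℂᵍ → A`; for `η = η_α` and `ζₖ = Z_{kα}` it sends `H` to `H_α`. -/
def thetaOperator (η : SuperAlg N) (ζ : Fin g → SuperAlg N) (F : (Fin g → ℂ) → SuperAlg N) :
    (Fin g → ℂ) → SuperAlg N :=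
  fun z => η * F z + (2 * (Real.pi : ℂ) * Complex.I)⁻¹ • ∑ k : Fin g, ζ k * pDeriv N g k F z

variable {η : SuperAlg N} {ζ : Fin g → SuperAlg N} {F H : (Fin g → ℂ) → SuperAlg N}

theorem differentiable_thetaOperator (hF : Differentiable ℂ F) :
    Differentiable ℂ (thetaOperator η ζ F) := by
  refine (differentiable_linearMap_comp (LinearMap.mulLeft ℂ η) hF).add
    (Differentiable.fun_const_smul (.fun_sum fun k _ => ?_) _)
  exact differentiable_linearMap_comp (LinearMap.mulLeft ℂ (ζ k)) (differentiable_pDeriv hF k)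

theorem pDeriv_thetaOperator (hF : Differentiable ℂ F) (k : Fin g) :
    pDeriv N g k (thetaOperator η ζ F) = thetaOperator η ζ (pDeriv N g k F) := by
  funext z
  have hzeroth := hasDerivAt_linearMap_comp (LinearMap.mulLeft ℂ η) (hasDerivAt_pDeriv hF k z)
  have hfirst (l : Fin g) := hasDerivAt_linearMap_comp (LinearMap.mulLeft ℂ (ζ l))
    (hasDerivAt_pDeriv (differentiable_pDeriv hF l) k z)
  simp only [pDeriv_comm hF k _] at hfirst
  exact (hzeroth.fun_add ((HasDerivAt.fun_sum fun l (_ : l ∈ Finset.univ) =>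
    hfirst l).fun_const_smul (2 * (Real.pi : ℂ) * Complex.I)⁻¹)).deriv

theorem thetaOperator_comp_add_right (hF : Differentiable ℂ F) (r : Fin g → ℂ) :
    thetaOperator η ζ (fun z => F (z + r)) = fun z => thetaOperator η ζ F (z + r) := by
  funext z
  simp only [thetaOperator, pDeriv_comp_add_right hF]

theorem algHom_comp_thetaOperator {M : ℕ} (φ : SuperAlg N →ₐ[ℂ] SuperAlg M)
    (hF : Differentiable ℂ F) :
    (fun z => φ (thetaOperator η ζ F z)) =
      thetaOperator (φ η) (fun k => φ (ζ k)) fun z => φ (F z) := by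
  have hpDeriv (k : Fin g) : pDeriv M g k (fun z => φ (F z)) = fun z => φ (pDeriv N g k F z) :=
    pDeriv_linearMap_comp φ.toLinearMap hF k
  funext z
  simp only [thetaOperator, hpDeriv, map_add, map_mul, map_smul, map_sum]

theorem shiftEval_thetaOperator (hF : Differentiable ℂ F) (w : Fin g → SuperAlg N) :
    shiftEval N g (thetaOperator η ζ F) w = thetaOperator η ζ (shiftEval N g F w) := by
  have hmDeriv (m : Fin g → ℕ) :
      mDeriv N g m (thetaOperator η ζ F) = thetaOperator η ζ (mDeriv N g m F) :=
    mDeriv_comm_of_pDeriv_comm (fun _ => pDeriv_thetaOperator) hF m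
  have hmDeriv_pDeriv (m : Fin g → ℕ) (k : Fin g) :
      mDeriv N g m (pDeriv N g k F) = pDeriv N g k (mDeriv N g m F) :=
    mDeriv_comm_of_pDeriv_comm (fun _ hF l => pDeriv_comm hF l k) hF m
  funext z
  simp only [shiftEval, hmDeriv]
  simp only [thetaOperator, pDeriv_shiftEval hF]
  simp only [shiftEval, hmDeriv_pDeriv, Finset.mul_sum]
  rw [Finset.sum_comm, Finset.smul_sum, ← Finset.sum_add_distrib]
  refine Finset.sum_congr rfl fun m _ => ?_
  simp only [add_mul, smul_mul_assoc, Finset.sum_mul, mul_assoc, mul_smul_comm, smul_add,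
    ← Finset.smul_sum]
  rw [smul_comm]

theorem pDeriv_expFactor_mul (hH : Differentiable ℂ H) (Ze : Matrix (Fin g) (Fin g) (SuperAlg N))
    (i k : Fin g) (z : Fin g → ℂ) :
    pDeriv N g k (fun z => expFactor N g Ze i z * H z) z =
      expFactor N g Ze i z * pDeriv N g k H z -
        if k = i then (2 * (Real.pi : ℂ) * Complex.I) • (expFactor N g Ze i z * H z) else 0 := by
  let ν : SuperAlg N :=
    nexp N (algebraMap ℂ (SuperAlg N) (-(Real.pi : ℂ) * Complex.I) * nilpPart N (Ze i i))
  have hcoord : HasDerivAt (fun t => Function.update z k t i) (if k = i then 1 else 0) (z k) := by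
    simpa [Pi.single_apply, eq_comm] using hasDerivAt_pi.mp (hasDerivAt_update z k (z k)) i
  have hexp := (((hcoord.const_mul 2).add_const (reduce N (Ze i i))).const_mul
    (-(Real.pi : ℂ) * Complex.I)).cexp
  have hmul := hasDerivAt_linearMap_comp (LinearMap.mulLeft ℂ ν) (hasDerivAt_pDeriv hH k z)
  have hsplit : (fun t => expFactor N g Ze i (Function.update z k t) * H (Function.update z k t)) =
      fun t => Complex.exp (-(Real.pi : ℂ) * Complex.I *
        (2 * Function.update z k t i + reduce N (Ze i i))) • (ν * H (Function.update z k t)) :=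
    funext fun t => smul_mul_assoc _ _ _
  calc pDeriv N g k (fun z => expFactor N g Ze i z * H z) z
      = _ := (congrArg (deriv · (z k)) hsplit).trans (hexp.smul hmul).deriv
    _ = _ := by
      simp only [Function.update_eq_self, LinearMap.mulLeft_apply, expFactor, smul_mul_assoc]
      rw [sub_eq_add_neg]
      congr 1
      split_ifs
      · rw [smul_smul, ← neg_smul]
        congr 1
        ring
      · simp

theorem thetaOperator_expFactor_mul (hH : Differentiable ℂ H)
    {Ze : Matrix (Fin g) (Fin g) (SuperAlg N)} {i : Fin g} (hZe : Ze i i ∈ evenPart N)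
    (z : Fin g → ℂ) :
    thetaOperator (η + ζ i) ζ (fun z => expFactor N g Ze i z * H z) z =
      expFactor N g Ze i z * thetaOperator η ζ H z := by
  have hcomm (a b : SuperAlg N) : a * (expFactor N g Ze i z * b) = expFactor N g Ze i z * (a * b) :=
    ((commute_expFactor hZe z a).left_comm b).symm
  simp only [thetaOperator, pDeriv_expFactor_mul hH, mul_sub, hcomm, Finset.sum_sub_distrib,
    smul_sub, mul_ite, mul_zero, Finset.sum_ite_eq', Finset.mem_univ, if_true, mul_smul_comm,
    inv_smul_smul₀ Complex.two_pi_I_ne_zero, ← Finset.mul_sum, mul_add, add_mul]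
  abel

end ThetaOperator

theorem statement16_general {N g : ℕ} {φ : Fin g → (SuperAlg N →ₐ[ℂ] SuperAlg N)}
    {Ze : Matrix (Fin g) (Fin g) (SuperAlg N)} (hZe : ∀ i, Ze i i ∈ evenPart N)
    {η : SuperAlg N} {ζ : Fin g → SuperAlg N} (hφζ : ∀ i k, φ i (ζ k) = ζ k)
    (hφη : ∀ i, φ i η = η + ζ i) {H : (Fin g → ℂ) → SuperAlg N}
    (hH : IsSuperTheta N g φ Ze H) : IsSuperTheta N g φ Ze (thetaOperator η ζ H) := by
  obtain ⟨hdiff, hperiodic, htheta⟩ := hH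
  refine ⟨differentiable_thetaOperator hdiff, fun j z => ?_, fun i z => ?_⟩
  · have hH : (fun z => H (z + Pi.single j 1)) = H := funext (hperiodic j)
    rw [← congrFun (thetaOperator_comp_add_right hdiff _) z, hH]
  · have hφH : Differentiable ℂ fun z => φ i (H z) :=
      differentiable_linearMap_comp (φ i).toLinearMap hdiff
    have hshift : shiftEval N g (fun z => φ i (H z)) (Ze i) =
        fun z => expFactor N g Ze i z * H z := funext (htheta i)
    rw [algHom_comp_thetaOperator (φ i) hdiff, shiftEval_thetaOperator hφH, hshift, hφη]
    simp only [hφζ]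
    exact thetaOperator_expFactor_mul hdiff (hZe i) z

/-- If `H : ℂᵍ → A` is a super theta function for `(Z_e, Z_o)` (with
`g = g'+1`, `Z_e` even, `Z_o` odd, entries from `Λ ⊆ A`), then for each `α` the function
`H_α := η_α·H + (1/(2πi))·Σ_k Z_{kα}·(∂H/∂z_k)` is again a super theta function for
`(Z_e, Z_o)`: it satisfies `H_α(z + e_j) = H_α(z)` and
`φ_i(H_α)(z + Z_i) = exp(−πi(2z_i + Z_{ii}))·H_α(z)` for all `i`, `z`. -/
theorem statement16 (n g' : ℕ)
    (Ze : Matrix (Fin (g' + 1)) (Fin (g' + 1)) (SuperAlg (n + g')))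
    (Zo : Matrix (Fin (g' + 1)) (Fin g') (SuperAlg (n + g')))
    (hZe : ∀ i j, Ze i j ∈ lambdaSub n g' ∧ Ze i j ∈ evenPart (n + g'))
    (hZo : ∀ i α, Zo i α ∈ lambdaSub n g' ∧ Zo i α ∈ oddPart (n + g'))
    (φ : Fin (g' + 1) → (SuperAlg (n + g') →ₐ[ℂ] SuperAlg (n + g')))
    (hφfix : ∀ (i : Fin (g' + 1)) (a : SuperAlg (n + g')), a ∈ lambdaSub n g' → φ i a = a)
    (hφeta : ∀ (i : Fin (g' + 1)) (α : Fin g'), φ i (eta n g' α) = eta n g' α + Zo i α)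
    (H : (Fin (g' + 1) → ℂ) → SuperAlg (n + g'))
    (hH : IsSuperTheta (n + g') (g' + 1) φ Ze H) (α : Fin g') :
    IsSuperTheta (n + g') (g' + 1) φ Ze
      (fun z => eta n g' α * H z +
        (2 * (Real.pi : ℂ) * Complex.I)⁻¹ •
          ∑ k : Fin (g' + 1), Zo k α * pDeriv (n + g') (g' + 1) k H z) := by
  exact statement16_general (fun i => (hZe i i).2) (fun i k => hφfix i _ (hZo k α).1)
    (fun i => hφeta i α) hH

end
end
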